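/- Let Ω ⊂ ℝ^d be a bounded, connected, open set admitting the relative isoperimetric inequality, let (A, m) be an admissible pair of C¹ coefficients with constant κ, and let p ≥ 1. Let U ⊆ C¹(Ω̄; ℝ^N) be a set of functions such that: (i) u ≥ 0 on Ω for every u ∈ U; (ii) there is no sequence (u_n) ⊆ U that is bounded in L^p(Ω; ℝ^N) and no nonempty index set I ⊆ {1,…,N} such that u_{in} → 0 in measure on Ω for every i ∈ I and f_{in} → 0 in measure on Ω for every i ∉ I, where f_{in}(x) = m_i(x) − Σ_{j=1}^N a_{ij}(x) u_{jn}(x). Then there exists C > 0 such that for every u ∈ U one has ∫_Ω Σ_{i=1}^N |f_i(x)|^p dx ≤ C ∫_Ω Σ_{i=1}^N u_i(x) (|f_i(x)|^p + |∇f_i(x)|^p) dx, where f_i(x) = m_i(x) − Σ_{j=1}^N a_{ij}(x) u_j(x), ∇f_i is its classical gradient, and the right-hand side is allowed to be infinite. -/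

import Mathlib

/-!
Write `f = m - A u`, `G = ∑ u i |f i| ^ p`, `dens = ∑ u i (|f i| ^ p + ‖∇ f i‖ ^ p)` and
`D = ∫_Ω dens`.

*Pointwise structure.* Expanding determinants by multilinearity in the rows, the conditions on the
minors show that `u ≥ 0` and `u i * f i ≥ 0` for all `i` force `f j > 0` wherever `u j = 0`
(`fComp_pos`), and that `G` is coercive in `u` (`coercive`). By compactness of the closure of `Ω`
these facts become quantitative (`pointwise_bounds`): there are constants `c`, `δ`, `M` such that
`f j < c` implies `u j ≥ c` whenever all `f i > -c`; if `G < δ`, then each `f j` satisfies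
`|f j| < c / 4` or `f j > c / 2`; and `∑ |f i| ^ p` and `∑ |u i| ^ p` are at most `M + M * G`.

*Isoperimetry.* For a set `K` of indices and a level `t` in `(c / 4, c / 2)`, let `S_K` be the
region where `|f i| < t` for `i ∈ K` and `f i > t` for `i ∉ K`. On its relative boundary some
`|f j| = t`, and there `u j ≥ c`, so `1 + ‖∇ f j‖` is controlled by `dens`. An Eilenberg-type
inequality (`eilenberg`) bounds the area of such level sets, averaged over `t`, by `D`. With a good
choice of `t` the isoperimetric inequality shows that `S_K` or its complement has measure at most
`C₁ D` (`exists_region`).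

*Conclusion.* The regions cover `Ω` up to `{dens ≥ δ}`, a set of measure at most `D / δ`. If no
region fills half of `Ω`, then `|Ω| ≤ C D`. If `S_K` with `K` not everything fills half of `Ω`, then
`|Ω| ≤ C D` again: otherwise `D` tends to `0` along a sequence bounded in `L^p`, with `f i → 0` in
measure for `i ∈ K` and `u i → 0` in measure for `i ∉ K`, which is excluded by hypothesis. In both
cases `∫ ∑ |f i| ^ p ≤ M |Ω| + M D` suffices. Finally, if the region where all `f i` are small fills
half of `Ω`, then `u i ≥ c` on it, so `∑ |f i| ^ p ≤ G / c` there, while the rest of `Ω` has measure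
at most `C₁ D`.
-/

open MeasureTheory Filter

/-- Principal minor of `A` over the index set `I`. -/
noncomputable def minorP {N : ℕ} (A : Matrix (Fin N) (Fin N) ℝ) (I : Finset (Fin N)) : ℝ :=
  Matrix.det (Matrix.of fun i j : {x : Fin N // x ∈ I} => A i.1 j.1)

/-- The determinant `Δ_{I,j}` obtained by bordering the principal minor over `I`
with the column `m` and the row `j`. -/
noncomputable def minorM {N : ℕ} (A : Matrix (Fin N) (Fin N) ℝ) (m : Fin N → ℝ)
    (I : Finset (Fin N)) (j : Fin N) : ℝ :=
  Matrix.det (Matrix.of fun k l : Option {x : Fin N // x ∈ I} =>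
    match k, l with
    | some k', some l' => A k'.1 l'.1
    | some k', none => m k'.1
    | none, some l' => A j l'.1
    | none, none => m j)

/-- An admissible pair of coefficients with constant `κ`:
entries of `A` and `m` bounded by `1/κ`, all principal minors `Δ_I ≥ κ`,
and all bordered determinants `Δ_{I,j} ≥ κ` for `j ∉ I`. -/
def IsAdmissible {N : ℕ} (κ : ℝ) (A : Matrix (Fin N) (Fin N) ℝ) (m : Fin N → ℝ) : Prop :=
  (∀ i j, |A i j| ≤ 1 / κ) ∧ (∀ i, m i ≤ 1 / κ) ∧
    (∀ I : Finset (Fin N), κ ≤ minorP A I) ∧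
    (∀ I : Finset (Fin N), ∀ j ∉ I, κ ≤ minorM A m I j)

/-- `f_i(u) = m_i − Σ_j a_{ij} u_j`. -/
def fComp {N : ℕ} (A : Matrix (Fin N) (Fin N) ℝ) (m : Fin N → ℝ) (u : Fin N → ℝ)
    (i : Fin N) : ℝ :=
  m i - ∑ j, A i j * u j

/-! ### Determinant expansions -/

/-- A determinant whose row `x` is `α x • P x + β x • e x` is positive. By multilinearity it is
the sum over `T` of `∏_{x ∈ T} α x * ∏_{x ∉ T} β x` times the determinant with rows `P x` for
`x ∈ T` and `e x` otherwise; no term is negative, and the one with `T = {x | 0 < α x}` is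
positive. -/
lemma det_mix_pos {ι : Type*} [Fintype ι] [DecidableEq ι] (P : Matrix ι ι ℝ) (α β : ι → ℝ)
    (hα : ∀ x, 0 ≤ α x) (hβ : ∀ x, 0 ≤ β x) (hαβ : ∀ x, 0 < α x ∨ 0 < β x)
    (h : ∀ T : Finset ι, (∀ x ∈ T, 0 < α x) →
      0 < Matrix.det (Matrix.of fun x => if x ∈ T then P x else Pi.single x 1)) :
    0 < Matrix.det (Matrix.of fun x => α x • P x + β x • (Pi.single x 1 : ι → ℝ)) := by
  have key : Matrix.det (Matrix.of fun x => α x • P x + β x • (Pi.single x 1 : ι → ℝ)) =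
      ∑ T : Finset ι, (∏ x, if x ∈ T then α x else β x) *
        Matrix.det (Matrix.of fun x => if x ∈ T then P x else Pi.single x 1) := by
    have h1 := (Matrix.detRowAlternating (n := ι) (R := ℝ)).toMultilinearMap.map_add_univ
      (fun x => α x • P x) (fun x => β x • (Pi.single x 1 : ι → ℝ))
    refine Eq.trans h1 (Finset.sum_congr rfl fun T _ => ?_)
    have h2 := (Matrix.detRowAlternating (n := ι) (R := ℝ)).toMultilinearMap.map_smul_univ
      (fun x => if x ∈ T then α x else β x) (fun x => if x ∈ T then P x else Pi.single x 1)
    refine Eq.trans (congrArg _ ?_) h2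
    ext x : 1
    by_cases hx : x ∈ T <;> simp [hx]
  rw [key]
  apply Finset.sum_pos'
  · intro T _
    by_cases hT : ∀ x ∈ T, 0 < α x
    · refine mul_nonneg (Finset.prod_nonneg fun x _ => ?_) (h T hT).le
      split_ifs <;> simp [hα, hβ]
    · push Not at hT
      obtain ⟨x, hx, hx'⟩ := hT
      rw [Finset.prod_eq_zero (Finset.mem_univ x), zero_mul]
      simp [hx, le_antisymm hx' (hα x)]
  · classical
    refine ⟨Finset.univ.filter fun x => 0 < α x, Finset.mem_univ _, ?_⟩
    refine mul_pos (Finset.prod_pos fun x _ => ?_) (h _ (by simp))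
    by_cases hx : 0 < α x
    · simp [hx]
    · simpa [hx] using (hαβ x).resolve_left hx

/-- The form in which `det_mix_pos` is applied: a vector killed by all rows
`α x • P x + β x • e x` vanishes. -/
lemma mix_eq_zero {ι : Type*} [Fintype ι] [DecidableEq ι] (P : Matrix ι ι ℝ) (α β : ι → ℝ)
    (hα : ∀ x, 0 ≤ α x) (hβ : ∀ x, 0 ≤ β x) (hαβ : ∀ x, 0 < α x ∨ 0 < β x)
    (h : ∀ T : Finset ι, (∀ x ∈ T, 0 < α x) →
      0 < Matrix.det (Matrix.of fun x => if x ∈ T then P x else Pi.single x 1))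
    (z : ι → ℝ) (hz : ∀ x, α x * (∑ y, P x y * z y) + β x * z x = 0) : z = 0 := by
  have hdet := det_mix_pos P α β hα hβ hαβ h
  by_contra hne
  refine hdet.ne' (Matrix.exists_mulVec_eq_zero_iff.1 ⟨z, hne, ?_⟩)
  ext x
  have := hz x
  simp only [Matrix.mulVec, dotProduct, Matrix.of_apply, Pi.add_apply, Pi.smul_apply, smul_eq_mul,
    Pi.zero_apply, add_mul, Finset.sum_add_distrib, mul_assoc, ← Finset.mul_sum]
  rw [← this]
  simp [Pi.single_apply]

/-- Replacing the rows outside `T` by unit vectors reduces the determinant to the principal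
minor over `T`. -/
lemma det_rows_eq_block {ι : Type*} [Fintype ι] [DecidableEq ι] (P : Matrix ι ι ℝ) (T : Finset ι) :
    Matrix.det (Matrix.of fun x => if x ∈ T then P x else Pi.single x 1) =
      Matrix.det (Matrix.of fun i j : {x // x ∈ T} => P i.1 j.1) := by
  rw [Matrix.twoBlockTriangular_det _ (fun x => x ∈ T)]
  · have h2 : (Matrix.toSquareBlockProp (Matrix.of fun x => if x ∈ T then P x else Pi.single x 1)
        fun i => i ∉ T) = 1 := by
      ext i j
      simp [Matrix.toSquareBlockProp, i.2, Matrix.one_apply, Pi.single_apply, Subtype.ext_iff, eq_comm]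
    rw [h2, Matrix.det_one, mul_one]
    have h1 : (Matrix.toSquareBlockProp (Matrix.of fun x => if x ∈ T then P x else Pi.single x 1)
        fun i => i ∈ T) = Matrix.of fun i j : {x // x ∈ T} => P i.1 j.1 := by
      ext i j
      simp [Matrix.toSquareBlockProp, i.2]
    rw [h1]
    congr!
  · intro i hi j hj
    have : j ≠ i := by rintro rfl; exact hi hj
    simp [hi, this]


lemma minorP_rows {N : ℕ} (A : Matrix (Fin N) (Fin N) ℝ) (T : Finset (Fin N)) :
    Matrix.det (Matrix.of fun x => if x ∈ T then A x else Pi.single x 1) = minorP A T :=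
  det_rows_eq_block A T

/-- Rows of the bordered matrix: the row `some i` is `(A i, m i)` and the row `none` is
`(A j, m j)`. -/
def bordered {N : ℕ} (A : Matrix (Fin N) (Fin N) ℝ) (m : Fin N → ℝ) (j : Fin N) :
    Matrix (Option (Fin N)) (Option (Fin N)) ℝ :=
  fun x y => y.elim (m (x.getD j)) (A (x.getD j))

/-- The principal minors of `bordered A m j` avoiding the index `some j` are the admissibility
determinants `Δ_I` (if `none ∉ T`) and `Δ_{I,j}` (if `none ∈ T`). -/
lemma bordered_rows_pos {N : ℕ} {κ : ℝ} (hκ : 0 < κ) {A : Matrix (Fin N) (Fin N) ℝ}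
    {m : Fin N → ℝ} (h : IsAdmissible κ A m) (j : Fin N) (T : Finset (Option (Fin N)))
    (hT : some j ∉ T) :
    0 < Matrix.det (Matrix.of fun x => if x ∈ T then bordered A m j x else Pi.single x 1) := by
  rw [det_rows_eq_block]
  by_cases hn : none ∈ T
  · let e : Option {x // x ∈ Finset.eraseNone T} ≃ {x // x ∈ T} := Equiv.ofBijective
      (fun o => match o with
        | none => ⟨none, hn⟩
        | some i => ⟨some i.1, Finset.mem_eraseNone.1 i.2⟩) (by
      constructor
      · rintro (_ | i) (_ | k) hik
        · rfl
        · exact absurd (congrArg Subtype.val hik) (by simp)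
        · exact absurd (congrArg Subtype.val hik) (by simp)
        · exact congrArg some (Subtype.ext (Option.some.inj (congrArg Subtype.val hik)))
      · rintro ⟨(_ | i), hi⟩
        · exact ⟨none, rfl⟩
        · exact ⟨some ⟨i, Finset.mem_eraseNone.2 hi⟩, rfl⟩)
    rw [← Matrix.det_submatrix_equiv_self e]
    refine lt_of_lt_of_le hκ ((h.2.2.2 (Finset.eraseNone T) j (by simpa using hT)).trans_eq ?_)
    unfold minorM
    congr 1
    ext (_ | k) (_ | l) <;> rfl
  · let e : {x // x ∈ Finset.eraseNone T} ≃ {x // x ∈ T} := Equiv.ofBijective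
      (fun i => ⟨some i.1, Finset.mem_eraseNone.1 i.2⟩) (by
      constructor
      · rintro i k hik
        exact Subtype.ext (Option.some.inj (congrArg Subtype.val hik))
      · rintro ⟨(_ | i), hi⟩
        · exact absurd hi hn
        · exact ⟨⟨i, Finset.mem_eraseNone.2 hi⟩, rfl⟩)
    rw [← Matrix.det_submatrix_equiv_self e]
    exact lt_of_lt_of_le hκ ((h.2.2.1 (Finset.eraseNone T)).trans_eq rfl)

/-- A matrix with positive principal minors reverses the sign of no nonzero nonnegative vector. -/
lemma pmatrix_nonneg_eq_zero {N : ℕ} {κ : ℝ} (hκ : 0 < κ) {A : Matrix (Fin N) (Fin N) ℝ}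
    {m : Fin N → ℝ} (h : IsAdmissible κ A m) (u : Fin N → ℝ) (hu : ∀ i, 0 ≤ u i)
    (hAu : ∀ i, u i * (∑ j, A i j * u j) ≤ 0) : u = 0 := by
  refine mix_eq_zero A u (fun i => if 0 < u i then -∑ j, A i j * u j else 1) hu ?_ ?_ ?_ u ?_
  · intro i
    split_ifs with hi
    · have := hAu i
      by_contra hc
      push Not at hc
      nlinarith
    · norm_num
  · intro i
    by_cases hi : 0 < u i
    · exact Or.inl hi
    · simp [hi]
  · intro T _
    rw [minorP_rows]
    exact lt_of_lt_of_le hκ (h.2.2.1 T)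
  · intro i
    split_ifs with hi
    · ring
    · simp [le_antisymm (not_lt.1 hi) (hu i)]

/-- If `u ≥ 0` and `u i * f i ≥ 0` for all `i`, then `f j > 0` wherever `u j = 0`. Otherwise
`-f j ≥ 0`, and the nonzero vector `(-u, 1)` is killed by the rows `u i • (A i, m i) + f i • e i`
for `u i > 0`, by the unit rows for `u i = 0`, and by `(A j, m j) - f j • e_none`. -/
lemma fComp_pos {N : ℕ} {κ : ℝ} (hκ : 0 < κ) {A : Matrix (Fin N) (Fin N) ℝ}
    {m : Fin N → ℝ} (h : IsAdmissible κ A m) (u : Fin N → ℝ) (hu : ∀ i, 0 ≤ u i)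
    (huf : ∀ i, 0 ≤ u i * fComp A m u i) (j : Fin N) (hj : u j = 0) : 0 < fComp A m u j := by
  by_contra hf
  push Not at hf
  let α : Option (Fin N) → ℝ := fun x => x.elim 1 fun i => if i = j then 0 else u i
  let β : Option (Fin N) → ℝ := fun x => x.elim (-fComp A m u j)
    fun i => if 0 < u i then fComp A m u i else 1
  let z : Option (Fin N) → ℝ := fun x => x.elim 1 fun i => -u i
  have hsum : ∀ x, ∑ y, bordered A m j x y * z y = fComp A m u (x.getD j) := by
    intro x
    simp [Fintype.sum_option, bordered, z, fComp, sub_eq_add_neg]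
  have hz : z = 0 := by
    refine mix_eq_zero (bordered A m j) α β ?_ ?_ ?_ ?_ z ?_
    · rintro (_ | i)
      · simp [α]
      · simp only [α, Option.elim]; split_ifs <;> simp [hu]
    · rintro (_ | i)
      · simpa [β] using hf
      · simp only [β, Option.elim]
        split_ifs with hi
        · exact nonneg_of_mul_nonneg_right (huf i) hi
        · norm_num
    · rintro (_ | i)
      · simp [α]
      · by_cases hi : 0 < u i
        · left
          have : i ≠ j := by rintro rfl; exact hi.ne' hj
          simpa [α, this] using hi
        · right; simp [β, hi]
    · intro T hT
      refine bordered_rows_pos hκ h j T fun hjT => ?_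
      simpa [α] using hT _ hjT
    · rintro (_ | i)
      · rw [hsum]; simp [α, β, z]
      · rw [hsum]
        by_cases hi : 0 < u i
        · have : i ≠ j := by rintro rfl; exact hi.ne' hj
          simp [α, β, z, this, hi]; ring
        · have h0 : u i = 0 := le_antisymm (not_lt.1 hi) (hu i)
          simp [α, z, h0]
  have := congrFun hz none
  simp [z] at this

/-! ### Uniform pointwise bounds -/

lemma exists_pos_le_all {N : ℕ} (hN : 0 < N) (g : Fin N → ℝ) (hg : ∀ j, 0 < g j) :
    ∃ c, 0 < c ∧ ∀ j, c ≤ g j := by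
  have : Nonempty (Fin N) := ⟨⟨0, hN⟩⟩
  refine ⟨Finset.univ.inf' Finset.univ_nonempty g, ?_, fun j => Finset.inf'_le _ (Finset.mem_univ j)⟩
  rw [Finset.lt_inf'_iff]
  exact fun j _ => hg j

lemma continuousOn_fComp {X : Type*} [TopologicalSpace X] {Kc : Set X} {N : ℕ}
    {a : Fin N → Fin N → X → ℝ} {m : Fin N → X → ℝ}
    (ha : ∀ i j, ContinuousOn (a i j) Kc) (hm : ∀ i, ContinuousOn (m i) Kc)
    (s : Set (Fin N → ℝ)) (i : Fin N) :
    ContinuousOn (fun q : X × (Fin N → ℝ) => m i q.1 - ∑ j, a i j q.1 * q.2 j) (Kc ×ˢ s) := by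
  have h1 : Set.MapsTo Prod.fst (Kc ×ˢ s) Kc := fun q hq => hq.1
  refine ((hm i).comp continuousOn_fst h1).sub ?_
  refine continuousOn_finsetSum _ fun j _ => ?_
  exact ((ha i j).comp continuousOn_fst h1).mul (by fun_prop)

/-- Uniform version of `pmatrix_nonneg_eq_zero`, by compactness of `Kc` times the simplex and
homogeneity in `u`. -/
lemma coercive {X : Type*} [TopologicalSpace X] {Kc : Set X} (hK : IsCompact Kc) {N : ℕ}
    (hN : 0 < N) {κ : ℝ} (hκ : 0 < κ)
    {a : Fin N → Fin N → X → ℝ} {m : Fin N → X → ℝ}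
    (ha : ∀ i j, ContinuousOn (a i j) Kc)
    (hadm : ∀ x ∈ Kc, IsAdmissible κ (Matrix.of fun i j => a i j x) fun i => m i x) :
    ∃ α : ℝ, 0 < α ∧ ∀ x ∈ Kc, ∀ u : Fin N → ℝ, (∀ i, 0 ≤ u i) →
      ∃ i, α * (∑ j, u j) ^ 2 ≤ u i * ∑ j, a i j x * u j := by
  have : Nonempty (Fin N) := ⟨⟨0, hN⟩⟩
  let h : X × (Fin N → ℝ) → ℝ := fun q =>
    Finset.univ.sup' Finset.univ_nonempty fun i => q.2 i * ∑ j, a i j q.1 * q.2 j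
  have hc : ContinuousOn h (Kc ×ˢ stdSimplex ℝ (Fin N)) := by
    refine ContinuousOn.finset_sup'_apply Finset.univ_nonempty fun i _ => ?_
    have h1 : Set.MapsTo Prod.fst (Kc ×ˢ stdSimplex ℝ (Fin N)) Kc := fun q hq => hq.1
    refine ContinuousOn.mul (by fun_prop) (continuousOn_finsetSum _ fun j _ => ?_)
    exact ((ha i j).comp continuousOn_fst h1).mul (by fun_prop)
  obtain ⟨α, hα, hαh⟩ := (hK.prod (isCompact_stdSimplex ℝ (Fin N))).exists_forall_le' hc (a := 0) (by
    rintro ⟨x, w⟩ ⟨hx, hw⟩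
    by_contra hcon
    push Not at hcon
    have hw0 := pmatrix_nonneg_eq_zero hκ (hadm x hx) w hw.1 (fun i => by
      have := (Finset.sup'_le_iff _ _).1 hcon i (Finset.mem_univ i)
      simpa using this)
    have := hw.2
    simp [hw0] at this)
  refine ⟨α, hα, fun x hx u hu => ?_⟩
  set s := ∑ j, u j with hs
  have hs0 : 0 ≤ s := Finset.sum_nonneg fun j _ => hu j
  rcases hs0.eq_or_lt with h0 | hpos
  · refine ⟨⟨0, hN⟩, ?_⟩
    have : ∀ j, u j = 0 := fun j =>
      (Finset.sum_eq_zero_iff_of_nonneg (fun j _ => hu j)).1 h0.symm j (Finset.mem_univ j)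
    simp [← h0, this]
  · have hmem : (x, fun j => u j / s) ∈ Kc ×ˢ stdSimplex ℝ (Fin N) :=
      ⟨hx, fun j => div_nonneg (hu j) hs0, by
        simp only
        rw [← Finset.sum_div, ← hs, div_self hpos.ne']⟩
    obtain ⟨i, -, hi⟩ := Finset.exists_mem_eq_sup' (s := Finset.univ) Finset.univ_nonempty
      fun i => (u i / s) * ∑ j, a i j x * (u j / s)
    refine ⟨i, ?_⟩
    have h2 := (hαh _ hmem).trans_eq hi
    have h3 : (u i / s) * ∑ j, a i j x * (u j / s) = (u i * ∑ j, a i j x * u j) / s ^ 2 := by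
      simp only [← mul_div_assoc, ← Finset.sum_div]
      field_simp
    rw [h3, le_div_iff₀ (by positivity)] at h2
    exact h2

/-- The pointwise facts about `f = m - A u` with `u ≥ 0`, uniform over a compact parameter set:
if all `f i` are almost nonnegative, then for each `j` either `f j` or `u j` is bounded below;
if `∑ u i |f i| ^ p` is small, then each `f j` is either close to zero or bounded below; and
`∑ |f i| ^ p`, `∑ |u i| ^ p` are controlled by `1 + ∑ u i |f i| ^ p`. For large `u` they follow
from `coercive`, for bounded `u` from `fComp_pos` and compactness. -/
lemma pointwise_bounds {X : Type*} [TopologicalSpace X] {Kc : Set X} (hK : IsCompact Kc) {N : ℕ}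
    (hN : 0 < N) {κ p : ℝ} (hκ : 0 < κ) (hp : 1 ≤ p)
    {a : Fin N → Fin N → X → ℝ} {m : Fin N → X → ℝ}
    (ha : ∀ i j, ContinuousOn (a i j) Kc) (hm : ∀ i, ContinuousOn (m i) Kc)
    (hadm : ∀ x ∈ Kc, IsAdmissible κ (Matrix.of fun i j => a i j x) fun i => m i x) :
    ∃ c δ M : ℝ, 0 < c ∧ c ≤ 1 ∧ 0 < δ ∧ 0 < M ∧ ∀ x ∈ Kc, ∀ u : Fin N → ℝ, (∀ i, 0 ≤ u i) →
      ∀ f : Fin N → ℝ, (∀ i, f i = m i x - ∑ j, a i j x * u j) →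
      ((∀ i, -c < f i) → ∀ j, f j < c → c ≤ u j) ∧
      (∑ i, u i * |f i| ^ p < δ → ∀ j, |f j| < c / 4 ∨ c / 2 < f j) ∧
      ∑ i, |f i| ^ p ≤ M + M * ∑ i, u i * |f i| ^ p ∧
      ∑ i, |u i| ^ p ≤ M + M * ∑ i, u i * |f i| ^ p := by
  have : Nonempty (Fin N) := ⟨⟨0, hN⟩⟩
  obtain ⟨α, hα, hco⟩ := coercive hK hN hκ ha hadm
  have hp0 : 0 ≤ p := by linarith
  have hpos : ∀ x ∈ Kc, ∀ u : Fin N → ℝ, (∀ i, 0 ≤ u i) →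
      (∀ i, 0 ≤ u i * (m i x - ∑ j, a i j x * u j)) → ∀ j, u j = 0 →
      0 < m j x - ∑ k, a j k x * u k := fun x hx u hu huf j hj => by
    have := fComp_pos hκ (hadm x hx) u hu (by simpa [fComp] using huf) j hj
    simpa [fComp] using this
  have hm1 : ∀ x ∈ Kc, ∀ i, |m i x| ≤ 1 / κ := by
    intro x hx i
    have h1 := hpos x hx 0 (by simp) (by simp) i rfl
    simp only [Pi.zero_apply, mul_zero, Finset.sum_const_zero, sub_zero] at h1
    rw [abs_of_pos h1]
    exact (hadm x hx).2.1 i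
  have hAu : ∀ x ∈ Kc, ∀ u : Fin N → ℝ, (∀ i, 0 ≤ u i) → ∀ i,
      |∑ j, a i j x * u j| ≤ (∑ j, u j) / κ := by
    intro x hx u hu i
    refine (Finset.abs_sum_le_sum_abs _ _).trans ?_
    rw [Finset.sum_div]
    refine Finset.sum_le_sum fun j _ => ?_
    rw [abs_mul, abs_of_nonneg (hu j), div_eq_mul_one_div, mul_comm]
    exact mul_le_mul_of_nonneg_left ((hadm x hx).1 i j) (hu j)
  -- Beyond the radius `R` the quadratic growth of `u i * (A u) i` dominates `m`.
  set R : ℝ := max 1 (2 / (κ * α)) with hR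
  have hR1 : 1 ≤ R := le_max_left _ _
  have hlarge : ∀ x ∈ Kc, ∀ u : Fin N → ℝ, (∀ i, 0 ≤ u i) → R ≤ ∑ j, u j →
      ∃ i, m i x - ∑ j, a i j x * u j ≤ -(α * (∑ j, u j) / 2) ∧ α * κ * (∑ j, u j) ≤ u i := by
    intro x hx u hu hs
    obtain ⟨i, hi⟩ := hco x hx u hu
    set s := ∑ j, u j
    have hs1 : 1 ≤ s := hR1.trans hs
    have hus : u i ≤ s := Finset.single_le_sum (f := u) (fun j _ => hu j) (Finset.mem_univ i)
    have h1 := (le_abs_self _).trans (hAu x hx u hu i)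
    have h2 := (le_abs_self _).trans (hm1 x hx i)
    set w := ∑ j, a i j x * u j
    have hw : 0 < w := by
      by_contra hc
      push Not at hc
      have : u i * w ≤ 0 := mul_nonpos_of_nonneg_of_nonpos (hu i) hc
      have : 0 < α * s ^ 2 := by positivity
      linarith
    have h3 : α * s ≤ w := by
      have : α * s ^ 2 ≤ s * w := hi.trans (mul_le_mul_of_nonneg_right hus hw.le)
      nlinarith
    have h4 : 2 / (κ * α) ≤ s := (le_max_right _ _).trans hs
    have h5 : 1 / κ ≤ α * s / 2 := by
      rw [div_le_iff₀ (by positivity)] at h4 ⊢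
      linarith
    refine ⟨i, by linarith, ?_⟩
    have h6 : α * s ^ 2 ≤ u i * (s / κ) := hi.trans (mul_le_mul_of_nonneg_left h1 (hu i))
    have h7 : α * s ^ 2 * κ ≤ u i * s := by
      calc α * s ^ 2 * κ ≤ u i * (s / κ) * κ := mul_le_mul_of_nonneg_right h6 hκ.le
        _ = u i * s := by field_simp
    nlinarith
  set g0 : ℝ := α * κ * (α / 2) ^ p with hg0
  have hg0p : 0 < g0 := by positivity
  have hGnn : ∀ u f : Fin N → ℝ, (∀ i, 0 ≤ u i) → ∀ i ∈ Finset.univ, 0 ≤ u i * |f i| ^ p :=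
    fun u f hu i _ => mul_nonneg (hu i) (by positivity)
  have hG : ∀ x ∈ Kc, ∀ u : Fin N → ℝ, (∀ i, 0 ≤ u i) → R ≤ ∑ j, u j →
      ∀ f : Fin N → ℝ, (∀ i, f i = m i x - ∑ j, a i j x * u j) →
      g0 * (∑ j, u j) ^ p ≤ ∑ i, u i * |f i| ^ p := by
    intro x hx u hu hs f hf
    obtain ⟨i, hi1, hi2⟩ := hlarge x hx u hu hs
    refine le_trans ?_ (Finset.single_le_sum (hGnn u f hu) (Finset.mem_univ i))
    rw [← hf] at hi1
    set s := ∑ j, u j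
    have hs1 : 1 ≤ s := hR1.trans hs
    have h1 : α / 2 * s ≤ |f i| := by
      rw [abs_of_nonpos (by nlinarith)]; linarith
    have h2 : (α / 2) ^ p * s ^ p ≤ |f i| ^ p := by
      rw [← Real.mul_rpow (by positivity) (by positivity)]
      exact Real.rpow_le_rpow (by positivity) h1 hp0
    have h3 : α * κ ≤ u i := le_trans (le_mul_of_one_le_right (by positivity) hs1) hi2
    calc g0 * s ^ p = α * κ * ((α / 2) ^ p * s ^ p) := by rw [hg0]; ring
      _ ≤ u i * |f i| ^ p := mul_le_mul h3 h2 (by positivity) (hu i)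
  have hbox : ∀ u : Fin N → ℝ, (∀ i, 0 ≤ u i) → ∑ j, u j ≤ R →
      u ∈ Set.Icc (0 : Fin N → ℝ) (fun _ => R) := fun u hu hs =>
    ⟨hu, fun i => (Finset.single_le_sum (f := u) (fun j _ => hu j) (Finset.mem_univ i)).trans hs⟩
  have hKB : IsCompact (Kc ×ˢ Set.Icc (0 : Fin N → ℝ) (fun _ => R)) := hK.prod isCompact_Icc
  have hfc := continuousOn_fComp ha hm (Set.Icc (0 : Fin N → ℝ) (fun _ => R))
  -- Where the maximum below is nonpositive, `u j = 0`, `f j ≤ 0` and all `f i ≥ 0`, which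
  -- `fComp_pos` excludes; compactness gives a positive lower bound.
  have hc1 : ∀ j : Fin N, ∃ c : ℝ, 0 < c ∧ ∀ q ∈ Kc ×ˢ Set.Icc (0 : Fin N → ℝ) (fun _ => R),
      c ≤ max (max (q.2 j) (m j q.1 - ∑ k, a j k q.1 * q.2 k))
        (Finset.univ.sup' Finset.univ_nonempty fun i => -(m i q.1 - ∑ k, a i k q.1 * q.2 k)) := by
    intro j
    refine hKB.exists_forall_le' (a := 0) ?_ ?_
    · refine ContinuousOn.sup (ContinuousOn.sup (by fun_prop) (hfc j)) ?_
      exact ContinuousOn.finset_sup'_apply Finset.univ_nonempty fun i _ => (hfc i).neg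
    · rintro ⟨x, u⟩ ⟨hx, hu⟩
      by_contra hcon
      push Not at hcon
      rw [max_le_iff, max_le_iff, Finset.sup'_le_iff] at hcon
      obtain ⟨⟨h1, h2⟩, h3⟩ := hcon
      have := hpos x hx u hu.1 (fun i => mul_nonneg (hu.1 i) (by
        have := h3 i (Finset.mem_univ i)
        simpa using this)) j (le_antisymm h1 (hu.1 j))
      exact absurd h2 (not_le.2 this)
  choose cj hcj hcj' using hc1
  obtain ⟨c0, hc0, hc0'⟩ := exists_pos_le_all hN cj hcj
  obtain ⟨c, hc, hcc0, hc1, hcα⟩ : ∃ c : ℝ, 0 < c ∧ c ≤ c0 ∧ c ≤ 1 ∧ c ≤ α / 2 :=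
    ⟨min c0 (min 1 (α / 2)), by positivity, min_le_left _ _, (min_le_right _ _).trans
      (min_le_left _ _), (min_le_right _ _).trans (min_le_right _ _)⟩
  have hA1 : ∀ x ∈ Kc, ∀ u : Fin N → ℝ, (∀ i, 0 ≤ u i) →
      (∀ i, -c < m i x - ∑ j, a i j x * u j) → ∀ j, m j x - ∑ k, a j k x * u k < c → c ≤ u j := by
    intro x hx u hu hf j hj
    rcases le_total R (∑ j, u j) with hs | hs
    · obtain ⟨i, hi, -⟩ := hlarge x hx u hu hs
      have := hf i
      nlinarith [hR1.trans hs]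
    · have h1 := (hcc0.trans (hc0' j)).trans (hcj' j (x, u) ⟨hx, hbox u hu hs⟩)
      rw [le_max_iff, le_max_iff] at h1
      rcases h1 with (h1 | h1) | h1
      · exact h1
      · exact absurd hj (not_lt.2 h1)
      · obtain ⟨i, -, hi⟩ := (Finset.le_sup'_iff _).1 h1
        have := hf i
        simp only at hi
        linarith
  -- Where `∑ u i |f i| ^ p` vanishes, all `f i ≥ 0`, and `hA1` forces `f j = 0` or `f j ≥ c`.
  have hd1 : ∀ j : Fin N, ∃ δ : ℝ, 0 < δ ∧ ∀ q ∈ (Kc ×ˢ Set.Icc (0 : Fin N → ℝ) (fun _ => R)),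
      δ ≤ max (∑ i, q.2 i * |m i q.1 - ∑ k, a i k q.1 * q.2 k| ^ p)
        (max (c / 4 - |m j q.1 - ∑ k, a j k q.1 * q.2 k|)
          ((m j q.1 - ∑ k, a j k q.1 * q.2 k) - c / 2)) := by
    intro j
    refine hKB.exists_forall_le' (a := 0) ?_ ?_
    · refine ContinuousOn.sup (continuousOn_finsetSum _ fun i _ => ?_) (ContinuousOn.sup ?_ ?_)
      · exact ContinuousOn.mul (by fun_prop) ((hfc i).abs.rpow_const fun _ _ => Or.inr hp0)
      · exact continuousOn_const.sub (hfc j).abs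
      · exact (hfc j).sub continuousOn_const
    · rintro ⟨x, u⟩ ⟨hx, hu⟩
      by_contra hcon
      push Not at hcon
      rw [max_le_iff, max_le_iff] at hcon
      obtain ⟨h1, h2, h3⟩ := hcon
      simp only at h1 h2 h3
      have hz : ∀ i, u i * (m i x - ∑ k, a i k x * u k) = 0 := by
        intro i
        have h0 := (Finset.sum_eq_zero_iff_of_nonneg (hGnn u
          (fun i => m i x - ∑ k, a i k x * u k) hu.1)).1
          (le_antisymm h1 (Finset.sum_nonneg (hGnn u _ hu.1))) i (Finset.mem_univ i)
        rcases mul_eq_zero.1 h0 with h | h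
        · rw [h, zero_mul]
        · rw [Real.rpow_eq_zero (abs_nonneg _) (by linarith), abs_eq_zero] at h
          rw [h, mul_zero]
      have hj0 := hpos x hx u hu.1 (fun i => (hz i).ge)
      have hfnn : ∀ i, 0 ≤ m i x - ∑ k, a i k x * u k := by
        intro i
        rcases mul_eq_zero.1 (hz i) with h | h
        · exact (hj0 i h).le
        · exact h.ge
      have h4 := hA1 x hx u hu.1 (fun i => by linarith [hfnn i]) j (by linarith)
      rcases mul_eq_zero.1 (hz j) with h | h
      · linarith
      · rw [h, abs_zero] at h2; linarith
  choose δj hδj hδj' using hd1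
  obtain ⟨δ0, hδ0, hδ0'⟩ := exists_pos_le_all hN δj hδj
  set M1 : ℝ := N * ((1 + R) / κ) ^ p + N * (2 / κ) ^ p / g0 + N * R ^ p + N / g0 with hM1
  have hN' : (0 : ℝ) < N := by exact_mod_cast hN
  have e1 : 0 < N * ((1 + R) / κ) ^ p := by positivity
  have e2 : 0 < N * (2 / κ) ^ p / g0 := by positivity
  have e3 : 0 < N * R ^ p := by positivity
  have e4 : 0 < N / g0 := by positivity
  refine ⟨c, min δ0 g0, M1, hc, hc1, by positivity, by positivity, fun x hx u hu f hf => ?_⟩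
  have hGn : 0 ≤ ∑ i, u i * |f i| ^ p := Finset.sum_nonneg (hGnn u f hu)
  have hfs : ∀ i, |f i| ≤ (1 + ∑ j, u j) / κ := by
    intro i
    rw [hf i, add_div]
    exact (abs_sub _ _).trans (add_le_add (hm1 x hx i) (hAu x hx u hu i))
  have hus : ∀ i, |u i| ≤ ∑ j, u j := fun i => by
    rw [abs_of_nonneg (hu i)]
    exact Finset.single_le_sum (f := u) (fun j _ => hu j) (Finset.mem_univ i)
  have hsum : ∀ (g : Fin N → ℝ) (b : ℝ), (∀ i, |g i| ≤ b) → ∑ i, |g i| ^ p ≤ N * b ^ p := by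
    intro g b hb
    refine (Finset.sum_le_card_nsmul Finset.univ _ (b ^ p) fun i _ =>
      Real.rpow_le_rpow (abs_nonneg _) (hb i) hp0).trans_eq ?_
    simp
  refine ⟨?_, ?_, ?_, ?_⟩
  · intro h j hj
    exact hA1 x hx u hu (fun i => by rw [← hf]; exact h i) j (by rw [← hf]; exact hj)
  · intro hlt j
    rcases le_total R (∑ j, u j) with hs | hs
    · exfalso
      have h1 := hG x hx u hu hs f hf
      have h2 : 1 ≤ (∑ j, u j) ^ p := Real.one_le_rpow (hR1.trans hs) hp0
      have := hlt.trans_le (min_le_right _ _)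
      nlinarith
    · have h1 := (hδ0' j).trans (hδj' j (x, u) ⟨hx, hbox u hu hs⟩)
      simp only [← hf] at h1
      rw [le_max_iff, le_max_iff] at h1
      rcases h1 with h1 | h1 | h1
      · exact absurd (hlt.trans_le (min_le_left _ _)) (not_lt.2 h1)
      · left; linarith
      · right; linarith
  · rcases le_total R (∑ j, u j) with hs | hs
    · have h1 := hG x hx u hu hs f hf
      have hs1 := hR1.trans hs
      have h2 : ∑ i, |f i| ^ p ≤ N * ((2 / κ) ^ p * (∑ j, u j) ^ p) := by
        rw [← Real.mul_rpow (by positivity) (by positivity)]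
        refine hsum f _ fun i => (hfs i).trans ?_
        rw [div_mul_eq_mul_div]
        gcongr
        linarith
      have h3 : N * ((2 / κ) ^ p * (∑ j, u j) ^ p) ≤
          N * (2 / κ) ^ p / g0 * ∑ i, u i * |f i| ^ p := by
        refine le_trans (le_of_eq ?_) (mul_le_mul_of_nonneg_left h1 e2.le)
        field_simp
      have h4 : N * (2 / κ) ^ p / g0 ≤ M1 := by linarith
      nlinarith [mul_le_mul_of_nonneg_right h4 hGn]
    · have h2 : ∑ i, |f i| ^ p ≤ N * ((1 + R) / κ) ^ p := by
        refine hsum f _ fun i => (hfs i).trans ?_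
        gcongr
      have : 0 ≤ M1 * ∑ i, u i * |f i| ^ p := by positivity
      linarith
  · rcases le_total R (∑ j, u j) with hs | hs
    · have h1 := hG x hx u hu hs f hf
      have h2 : ∑ i, |u i| ^ p ≤ N * (∑ j, u j) ^ p := hsum u _ hus
      have h3 : N * (∑ j, u j) ^ p ≤ N / g0 * ∑ i, u i * |f i| ^ p := by
        refine le_trans (le_of_eq ?_) (mul_le_mul_of_nonneg_left h1 e4.le)
        field_simp
      have h4 : N / g0 ≤ M1 := by linarith
      nlinarith [mul_le_mul_of_nonneg_right h4 hGn]
    · have h2 : ∑ i, |u i| ^ p ≤ N * R ^ p := hsum u _ fun i => (hus i).trans hs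
      have : 0 ≤ M1 * ∑ i, u i * |f i| ^ p := by positivity
      linarith

/-! ### An Eilenberg-type inequality -/

/-- The half-open cube of the grid of mesh `1 / (n + 1)` with integer label `k`. -/
def gridCube {d : ℕ} (n : ℕ) (k : Fin d → ℤ) : Set (EuclideanSpace ℝ (Fin d)) :=
  {x | ∀ i, ⌊((n : ℝ) + 1) * x i⌋ = k i}

lemma gridCube_eq {d : ℕ} (n : ℕ) (k : Fin d → ℤ) :
    gridCube n k = (MeasurableEquiv.toLp 2 (Fin d → ℝ)).symm ⁻¹'
      (Set.univ.pi fun i => Set.Ico ((k i : ℝ) / (n + 1)) ((k i + 1 : ℝ) / (n + 1))) := by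
  ext x
  have hn : (0 : ℝ) < n + 1 := by positivity
  simp only [gridCube, Set.mem_ofPred_eq, Set.mem_preimage, Set.mem_univ_pi, Set.mem_Ico,
    Int.floor_eq_iff, div_le_iff₀ hn, lt_div_iff₀ hn, mul_comm]
  rfl

lemma measurableSet_gridCube {d : ℕ} (n : ℕ) (k : Fin d → ℤ) : MeasurableSet (gridCube n k) := by
  rw [gridCube_eq]
  exact (MeasurableEquiv.measurable _) (MeasurableSet.univ_pi fun i => measurableSet_Ico)

lemma volume_gridCube {d : ℕ} (n : ℕ) (k : Fin d → ℤ) :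
    volume (gridCube n k) = ENNReal.ofReal ((1 / ((n : ℝ) + 1)) ^ d) := by
  rw [gridCube_eq, (EuclideanSpace.volume_preserving_symm_measurableEquiv_toLp
    (Fin d)).measure_preimage_equiv, Real.volume_pi_Ico]
  have : ∀ i, ((k i + 1 : ℝ) / (n + 1)) - (k i : ℝ) / (n + 1) = 1 / (n + 1) := fun i => by ring
  simp only [this, Finset.prod_const, Finset.card_univ, Fintype.card_fin]
  rw [ENNReal.ofReal_pow (by positivity)]

lemma dist_gridCube {d : ℕ} (n : ℕ) (k : Fin d → ℤ) {x y : EuclideanSpace ℝ (Fin d)}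
    (hx : x ∈ gridCube n k) (hy : y ∈ gridCube n k) : dist x y ≤ d / ((n : ℝ) + 1) := by
  have hn : (0 : ℝ) < n + 1 := by positivity
  rw [EuclideanSpace.dist_eq]
  apply Real.sqrt_le_iff.2 ⟨by positivity, ?_⟩
  have h1 : ∀ i, dist (x i) (y i) ^ 2 ≤ (1 / ((n : ℝ) + 1)) ^ 2 := by
    intro i
    have h2 := Int.abs_sub_lt_one_of_floor_eq_floor ((hx i).trans (hy i).symm)
    rw [← mul_sub, abs_mul, abs_of_pos hn] at h2
    refine pow_le_pow_left₀ dist_nonneg ?_ 2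
    rw [Real.dist_eq, le_div_iff₀ hn]
    linarith
  refine (Finset.sum_le_card_nsmul _ _ _ fun i _ => h1 i).trans ?_
  simp only [Finset.card_univ, Fintype.card_fin, nsmul_eq_mul]
  rw [div_eq_mul_one_div (d : ℝ), mul_pow]
  refine mul_le_mul_of_nonneg_right ?_ (by positivity)
  exact_mod_cast Nat.le_self_pow two_ne_zero d

/-- The level sets of `f` in a compact `K` are covered by grid cubes of diameter at most `ρ n`. A
cube meets the level `t` only for `t` in an interval of length about `2 ρ n ‖∇ f‖`, so the
integral over `t` of the covering sums `H n` is at most a constant times `∫ (1 + ‖∇ f‖)`; the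
liminf of `H n` bounds the Hausdorff measure, and Fatou's lemma bounds its integral. -/
lemma eilenberg_compact {d : ℕ} (hd : 2 ≤ d) {V : Set (EuclideanSpace ℝ (Fin d))} (hV : IsOpen V)
    {f : EuclideanSpace ℝ (Fin d) → ℝ} (hf : ContDiffOn ℝ 1 f V)
    {K : Set (EuclideanSpace ℝ (Fin d))} (hK : IsCompact K) (hKV : K ⊆ V) :
    ∃ h : ℝ → ENNReal, Measurable h ∧
      (∀ t, μH[(d : ℝ) - 1] (K ∩ {x | f x = t}) ≤ h t) ∧
      ∫⁻ t, h t ≤ ENNReal.ofReal (2 * (d : ℝ) ^ d) *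
        ∫⁻ x in V, ENNReal.ofReal (1 + ‖fderiv ℝ f x‖) := by
  have hcd : ∀ x ∈ V, ContDiffAt ℝ 1 f x := fun x hx => hf.contDiffAt (hV.mem_nhds hx)
  have hd1 : (0 : ℝ) < (d : ℝ) - 1 := by
    have : (2 : ℝ) ≤ d := by exact_mod_cast hd
    linarith
  -- A radius at which balls about `K` stay in `V` and the derivative is almost constant.
  obtain ⟨r, hr, hrV⟩ : ∃ r > 0, ∀ x ∈ K, ∀ y, dist y x < r →
      y ∈ V ∧ |‖fderiv ℝ f y‖ - ‖fderiv ℝ f x‖| < 1 / 2 := by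
    obtain ⟨r1, hr1, h1⟩ := hK.exists_thickening_subset_open hV hKV
    have h2 := hK.uniformContinuousAt_of_continuousAt (fun x => ‖fderiv ℝ f x‖)
      (fun x hx => ((hcd x (hKV hx)).continuousAt_fderiv one_ne_zero).norm)
      (Metric.dist_mem_uniformity (α := ℝ) (ε := 1 / 2) (by norm_num))
    obtain ⟨r2, hr2, h2⟩ := Metric.mem_uniformity_dist.1 h2
    refine ⟨min r1 r2, lt_min hr1 hr2, fun x hx y hy => ⟨h1 ?_, ?_⟩⟩
    · exact Metric.mem_thickening_iff.2 ⟨x, hx, hy.trans_le (min_le_left _ _)⟩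
    · have h3 := @h2 x y (by rw [dist_comm]; exact hy.trans_le (min_le_right _ _)) hx
      simp only [Set.mem_ofPred_eq, Real.dist_eq] at h3
      rwa [abs_sub_comm] at h3
  let ι : ℕ → Type := fun n => {k : Fin d → ℤ // (gridCube n k ∩ K).Nonempty}
  let z : ∀ n, ι n → EuclideanSpace ℝ (Fin d) := fun n k => k.2.some
  have hz : ∀ n (k : ι n), z n k ∈ gridCube n k.1 ∩ K := fun n k => k.2.some_mem
  let ρ : ℕ → ℝ := fun n => d / ((n : ℝ) + 1)
  have hρ0 : ∀ n, 0 ≤ ρ n := fun n => by positivity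
  have hρ : Tendsto ρ atTop (nhds 0) := by
    have := (tendsto_one_div_add_atTop_nhds_zero_nat (𝕜 := ℝ)).const_mul (d : ℝ)
    simpa [ρ, div_eq_mul_inv] using this
  have hρr : ∀ᶠ n in atTop, ρ n < r := hρ.eventually_lt_const hr
  let w : ∀ n, ι n → ℝ := fun n k => ρ n * (‖fderiv ℝ f (z n k)‖ + 1 / 2)
  let H : ℕ → ℝ → ENNReal := fun n t => ∑' k : ι n,
    (Metric.closedBall (f (z n k)) (w n k)).indicator
      (fun _ => ENNReal.ofReal (ρ n) ^ ((d : ℝ) - 1)) t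
  have hHm : ∀ n, Measurable (H n) := fun n => Measurable.tsum fun k =>
    measurable_const.indicator Metric.isClosed_closedBall.measurableSet
  refine ⟨fun t => liminf (fun n => H n t) atTop, Measurable.liminf hHm, fun t => ?_, ?_⟩
  · let S : ∀ n, ι n → Set (EuclideanSpace ℝ (Fin d)) := fun n k =>
      gridCube n k.1 ∩ (K ∩ {x | f x = t})
    have hS : ∀ n (k : ι n), Metric.ediam (S n k) ≤ ENNReal.ofReal (ρ n) := fun n k =>
      Metric.ediam_le fun x hx y hy => by
        rw [edist_dist]
        exact ENNReal.ofReal_le_ofReal (dist_gridCube n k.1 hx.1 hy.1)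
    refine (Measure.hausdorffMeasure_le_liminf_tsum ((d : ℝ) - 1) (K ∩ {x | f x = t})
      (l := atTop) (fun n => ENNReal.ofReal (ρ n)) ?_ S (Eventually.of_forall hS) ?_).trans ?_
    · simpa using ENNReal.tendsto_ofReal hρ
    · refine Eventually.of_forall fun n x hx => Set.mem_iUnion.2
        ⟨⟨fun i => ⌊((n : ℝ) + 1) * x i⌋, ⟨x, fun i => rfl, hx.1⟩⟩, ⟨fun i => rfl, hx⟩⟩
    · refine liminf_le_liminf ?_
      filter_upwards [hρr] with n hn
      refine ENNReal.tsum_le_tsum fun k => ?_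
      rcases (S n k).eq_empty_or_nonempty with he | ⟨x, hxQ, hxK, hxt⟩
      · rw [he, Metric.ediam_empty, ENNReal.zero_rpow_of_pos hd1]
        exact zero_le
      · have hmem : t ∈ Metric.closedBall (f (z n k)) (w n k) := by
          have hzk := hz n k
          have hdist : dist x (z n k) ≤ ρ n := dist_gridCube n k.1 hxQ hzk.1
          have hb := (convex_ball (z n k) r).norm_image_sub_le_of_norm_fderiv_le (𝕜 := ℝ) (f := f)
            (C := ‖fderiv ℝ f (z n k)‖ + 1 / 2) (x := z n k) (y := x)
            (fun y hy => (hcd y (hrV _ hzk.2 y hy).1).differentiableAt one_ne_zero)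
            (fun y hy => by
              have := (abs_lt.1 (hrV _ hzk.2 y hy).2).2
              linarith)
            (Metric.mem_ball_self hr) (hdist.trans_lt hn)
          rw [Metric.mem_closedBall, ← (show f x = t from hxt), Real.dist_eq, ← Real.norm_eq_abs]
          refine hb.trans ?_
          rw [mul_comm, ← dist_eq_norm]
          exact mul_le_mul_of_nonneg_right hdist (by positivity)
        rw [Set.indicator_of_mem hmem]
        exact ENNReal.rpow_le_rpow (hS n k) hd1.le
  · refine (lintegral_liminf_le hHm).trans ?_
    refine (liminf_le_liminf (v := fun _ => ENNReal.ofReal (2 * (d : ℝ) ^ d) *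
        ∫⁻ x in V, ENNReal.ofReal (1 + ‖fderiv ℝ f x‖)) ?_).trans_eq (liminf_const _)
    filter_upwards [hρr] with n hn
    have hQV : ∀ k : ι n, gridCube n k.1 ⊆ V := fun k y hy =>
      (hrV _ (hz n k).2 y ((dist_gridCube n k.1 hy (hz n k).1).trans_lt hn)).1
    have hterm : ∀ k : ι n, ∫⁻ t, (Metric.closedBall (f (z n k)) (w n k)).indicator
        (fun _ => ENNReal.ofReal (ρ n) ^ ((d : ℝ) - 1)) t ≤ ENNReal.ofReal (2 * (d : ℝ) ^ d) *
          ∫⁻ x in gridCube n k.1, ENNReal.ofReal (1 + ‖fderiv ℝ f x‖) := by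
      intro k
      rw [lintegral_indicator Metric.isClosed_closedBall.measurableSet, setLIntegral_const,
        Real.volume_closedBall]
      have h1 : ENNReal.ofReal (‖fderiv ℝ f (z n k)‖ + 1 / 2) * volume (gridCube n k.1) ≤
          ∫⁻ x in gridCube n k.1, ENNReal.ofReal (1 + ‖fderiv ℝ f x‖) := by
        rw [← setLIntegral_const]
        refine setLIntegral_mono' (measurableSet_gridCube n k.1) fun y hy => ?_
        refine ENNReal.ofReal_le_ofReal ?_
        have := (abs_lt.1 (hrV _ (hz n k).2 y
          ((dist_gridCube n k.1 hy (hz n k).1).trans_lt hn)).2).1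
        linarith
      refine le_trans (le_of_eq ?_) (mul_le_mul_right h1 _)
      have hρd : ENNReal.ofReal (ρ n) ^ ((d : ℝ) - 1) = ENNReal.ofReal (ρ n ^ (d - 1)) := by
        rw [ENNReal.ofReal_rpow_of_nonneg (hρ0 n) hd1.le, ← Real.rpow_natCast,
          Nat.cast_sub (by lia), Nat.cast_one]
      rw [hρd, volume_gridCube, ← ENNReal.ofReal_mul (by positivity),
        ← ENNReal.ofReal_mul (by positivity), ← ENNReal.ofReal_mul (by positivity)]
      congr 1
      obtain ⟨e, rfl⟩ : ∃ e, d = e + 1 := ⟨d - 1, by lia⟩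
      simp only [w, ρ, Nat.add_sub_cancel]
      rw [div_pow, div_pow, one_pow, pow_succ, pow_succ]
      field_simp
    calc ∫⁻ t, H n t = ∑' k : ι n, ∫⁻ t, (Metric.closedBall (f (z n k)) (w n k)).indicator
          (fun _ => ENNReal.ofReal (ρ n) ^ ((d : ℝ) - 1)) t :=
          lintegral_tsum fun k => (measurable_const.indicator
            Metric.isClosed_closedBall.measurableSet).aemeasurable
      _ ≤ ∑' k : ι n, ENNReal.ofReal (2 * (d : ℝ) ^ d) *
          ∫⁻ x in gridCube n k.1, ENNReal.ofReal (1 + ‖fderiv ℝ f x‖) :=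
          ENNReal.tsum_le_tsum hterm
      _ = ENNReal.ofReal (2 * (d : ℝ) ^ d) *
          ∫⁻ x in ⋃ k : ι n, gridCube n k.1, ENNReal.ofReal (1 + ‖fderiv ℝ f x‖) := by
          rw [ENNReal.tsum_mul_left, lintegral_iUnion (s := fun k : ι n => gridCube n k.1)
            (fun k => measurableSet_gridCube n k.1)]
          intro k l hkl
          refine Set.disjoint_left.2 fun x hx hy => hkl (Subtype.ext ?_)
          funext i
          exact (hx i).symm.trans (hy i)
      _ ≤ _ := by
          gcongr
          exact Set.iUnion_subset hQV

/-- An Eilenberg-type inequality, a one-sided substitute for the coarea formula. Since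
`t ↦ μH[d - 1] (V ∩ {f = t})` need not be known to be measurable, a measurable majorant is
produced. The summand `1` in `1 + ‖∇ f‖` absorbs the oscillation of the derivative on small
cubes. -/
lemma eilenberg {d : ℕ} (hd : 2 ≤ d) {V : Set (EuclideanSpace ℝ (Fin d))} (hV : IsOpen V)
    (hVb : Bornology.IsBounded V)
    {f : EuclideanSpace ℝ (Fin d) → ℝ} (hf : ContDiffOn ℝ 1 f V) :
    ∃ h : ℝ → ENNReal, Measurable h ∧
      (∀ t, μH[(d : ℝ) - 1] (V ∩ {x | f x = t}) ≤ h t) ∧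
      ∫⁻ t, h t ≤ ENNReal.ofReal (2 * (d : ℝ) ^ d) *
        ∫⁻ x in V, ENNReal.ofReal (1 + ‖fderiv ℝ f x‖) := by
  obtain ⟨F, hFc, hFV, hFU, hFm⟩ := hV.exists_iUnion_isClosed
  choose h hm hle hint using fun n => eilenberg_compact hd hV hf
    (Metric.isCompact_of_isClosed_isBounded (hFc n) (hVb.subset (hFV n))) (hFV n)
  refine ⟨fun t => liminf (fun n => h n t) atTop, Measurable.liminf hm, fun t => ?_, ?_⟩
  · have hmono : Monotone fun n => F n ∩ {x | f x = t} := fun i j hij =>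
      Set.inter_subset_inter_left _ (hFm hij)
    rw [← hFU, Set.iUnion_inter, hmono.measure_iUnion]
    refine iSup_le fun n => le_liminf_of_le (by isBoundedDefault) ?_
    filter_upwards [eventually_ge_atTop n] with k hk
    exact (measure_mono (hmono hk)).trans (hle k t)
  · refine (lintegral_liminf_le hm).trans ?_
    exact (liminf_le_liminf (Eventually.of_forall hint)).trans_eq (liminf_const _)

/-! ### Regions and the isoperimetric inequality -/

/-- The integrand `∑ i, u i * (|f i| ^ p + ‖∇ f i‖ ^ p)` of the right-hand side. -/
noncomputable def dens {d N : ℕ} (p : ℝ) (f u : Fin N → EuclideanSpace ℝ (Fin d) → ℝ)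
    (x : EuclideanSpace ℝ (Fin d)) : ℝ :=
  ∑ i, u i x * (|f i x| ^ p + ‖fderiv ℝ (f i) x‖ ^ p)

/-- The part of `Ω` where `|f i| < t` for `i ∈ K` and `f i > t` for `i ∉ K`. -/
def region {d N : ℕ} (Ω : Set (EuclideanSpace ℝ (Fin d)))
    (f : Fin N → EuclideanSpace ℝ (Fin d) → ℝ) (K : Finset (Fin N)) (t : ℝ) :
    Set (EuclideanSpace ℝ (Fin d)) :=
  {x ∈ Ω | ∀ i, f i x ∈ if i ∈ K then Set.Ioo (-t) t else Set.Ioi t}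

lemma isOpen_region {d N : ℕ} {Ω : Set (EuclideanSpace ℝ (Fin d))} (hΩ : IsOpen Ω)
    {f : Fin N → EuclideanSpace ℝ (Fin d) → ℝ} (hf : ∀ i, ContinuousOn (f i) Ω)
    (K : Finset (Fin N)) (t : ℝ) : IsOpen (region Ω f K t) := by
  have : region Ω f K t = Ω ∩ ⋂ i, (Ω ∩ f i ⁻¹' if i ∈ K then Set.Ioo (-t) t else Set.Ioi t) := by
    ext x
    simp only [region, Set.mem_ofPred_eq, Set.mem_inter_iff, Set.mem_iInter, Set.mem_preimage]
    exact ⟨fun h => ⟨h.1, fun i => ⟨h.1, h.2 i⟩⟩, fun h => ⟨h.1, fun i => (h.2 i).2⟩⟩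
  rw [this]
  refine hΩ.inter (isOpen_iInter_of_finite fun i => (hf i).isOpen_inter_preimage hΩ ?_)
  split_ifs
  exacts [isOpen_Ioo, isOpen_Ioi]

/-- On the boundary of a region all `f i ≥ -t`, and some `|f j|` equals `t`. -/
lemma frontier_region {d N : ℕ} {Ω : Set (EuclideanSpace ℝ (Fin d))} (hΩ : IsOpen Ω)
    {f : Fin N → EuclideanSpace ℝ (Fin d) → ℝ} (hf : ∀ i, ContinuousOn (f i) Ω)
    (K : Finset (Fin N)) {t : ℝ} (ht : 0 < t) {x : EuclideanSpace ℝ (Fin d)} (hx : x ∈ Ω)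
    (hxf : x ∈ frontier (region Ω f K t)) :
    (∀ i, -t ≤ f i x) ∧ ∃ j, f j x = t ∨ f j x = -t := by
  rw [(isOpen_region hΩ hf K t).frontier_eq] at hxf
  have hcl : ∀ i, f i x ∈ if i ∈ K then Set.Icc (-t) t else Set.Ici t := by
    intro i
    have h1 : f i x ∈ closure (f i '' region Ω f K t) :=
      ((hf i).continuousAt (hΩ.mem_nhds hx)).continuousWithinAt.mem_closure_image hxf.1
    have hc : IsClosed (if i ∈ K then Set.Icc (-t) t else Set.Ici t) := by
      split_ifs
      exacts [isClosed_Icc, isClosed_Ici]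
    refine closure_minimal ?_ hc h1
    rintro _ ⟨y, hy, rfl⟩
    have := hy.2 i
    split_ifs at this ⊢
    exacts [Set.Ioo_subset_Icc_self this, Set.Ioi_subset_Ici_self this]
  refine ⟨fun i => ?_, ?_⟩
  · have := hcl i
    split_ifs at this
    · exact this.1
    · have : t ≤ f i x := this
      linarith
  · by_contra hcon
    push Not at hcon
    refine hxf.2 ⟨hx, fun i => ?_⟩
    have h1 := hcl i
    obtain ⟨h2, h3⟩ := hcon i
    split_ifs at h1 ⊢
    · exact ⟨lt_of_le_of_ne h1.1 h3.symm, lt_of_le_of_ne h1.2 h2⟩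
    · exact lt_of_le_of_ne h1 h2.symm

/-- Where `u` and `|f|` are bounded below, `1 + g` is controlled by `u (|f| ^ p + g ^ p)`. -/
lemma dens_bound {u f g c p : ℝ} (hp : 1 ≤ p) (hc : 0 < c) (hc1 : c ≤ 1) (hu : c / 2 < u)
    (hf : c / 8 < |f|) (hg : 0 ≤ g) :
    1 + g ≤ 4 / c * (8 / c) ^ p * (u * (|f| ^ p + g ^ p)) := by
  have hp0 : 0 ≤ p := by linarith
  have h8 : 1 ≤ 8 / c := by rw [le_div_iff₀ hc]; linarith
  have h1 : 1 ≤ (8 / c) ^ p * |f| ^ p := by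
    rw [← Real.mul_rpow (by positivity) (by positivity)]
    refine Real.one_le_rpow ?_ hp0
    rw [div_mul_eq_mul_div, le_div_iff₀ hc]
    linarith
  have h2 : g ≤ 1 + g ^ p := by
    rcases le_total g 1 with h | h
    · have : 0 ≤ g ^ p := by positivity
      linarith
    · have : g ^ (1 : ℝ) ≤ g ^ p := Real.rpow_le_rpow_of_exponent_le h hp
      rw [Real.rpow_one] at this
      linarith
  have h3 : g ^ p ≤ (8 / c) ^ p * g ^ p :=
    le_mul_of_one_le_left (by positivity) (Real.one_le_rpow h8 hp0)
  have h4 : 1 ≤ 2 / c * u := by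
    rw [div_mul_eq_mul_div, le_div_iff₀ hc]; linarith
  have h5 : 0 ≤ (8 / c) ^ p * (|f| ^ p + g ^ p) := by positivity
  calc 1 + g ≤ 2 * ((8 / c) ^ p * (|f| ^ p + g ^ p)) := by
        have : 0 ≤ g ^ p := by positivity
        linarith
    _ ≤ 2 * ((2 / c * u) * ((8 / c) ^ p * (|f| ^ p + g ^ p))) := by
        have := le_mul_of_one_le_left h5 h4
        linarith
    _ = _ := by ring

/-- On the open set where `u j` and `|f j|` are bounded below, `1 + ‖∇ f j‖` is at most a constant
times `dens`, so `eilenberg` bounds the integrated measure of the level sets of `f j` by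
`∫ dens`. -/
lemma strip_bound {d N : ℕ} (hd : 2 ≤ d) {p c : ℝ} (hp : 1 ≤ p) (hc : 0 < c) (hc1 : c ≤ 1)
    {Ω : Set (EuclideanSpace ℝ (Fin d))} (hΩ : IsOpen Ω) (hΩb : Bornology.IsBounded Ω)
    {f u : Fin N → EuclideanSpace ℝ (Fin d) → ℝ}
    (hf : ∀ i, ContDiffOn ℝ 1 (f i) Ω) (hu : ∀ i, ContinuousOn (u i) Ω)
    (hu0 : ∀ x ∈ Ω, ∀ i, 0 ≤ u i x) (j : Fin N) :
    ∃ h : ℝ → ENNReal, Measurable h ∧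
      (∀ t, μH[(d : ℝ) - 1] ({x ∈ Ω | c / 2 < u j x ∧ c / 8 < |f j x|} ∩ {x | f j x = t}) ≤ h t) ∧
      ∫⁻ t, h t ≤ ENNReal.ofReal (2 * (d : ℝ) ^ d) * (ENNReal.ofReal (4 / c * (8 / c) ^ p) *
        ∫⁻ x in Ω, ENNReal.ofReal (dens p f u x)) := by
  set V : Set (EuclideanSpace ℝ (Fin d)) := {x ∈ Ω | c / 2 < u j x ∧ c / 8 < |f j x|} with hVdef
  have hVΩ : V ⊆ Ω := fun x hx => hx.1
  have hV : IsOpen V := by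
    have h1 := (hu j).isOpen_inter_preimage hΩ (isOpen_Ioi (a := c / 2))
    have h2 := (hf j).continuousOn.abs.isOpen_inter_preimage hΩ (isOpen_Ioi (a := c / 8))
    convert h1.inter h2 using 1
    ext x
    simp only [hVdef, Set.mem_ofPred_eq, Set.mem_inter_iff, Set.mem_preimage, Set.mem_Ioi]
    tauto
  obtain ⟨h, hm, hle, hint⟩ := eilenberg hd hV (hΩb.subset hVΩ) ((hf j).mono hVΩ)
  refine ⟨h, hm, hle, hint.trans (mul_le_mul_right ?_ _)⟩
  rw [← lintegral_const_mul' _ _ ENNReal.ofReal_ne_top]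
  refine (setLIntegral_mono' hV.measurableSet fun x hx => ?_).trans (lintegral_mono_set hVΩ)
  rw [← ENNReal.ofReal_mul (by positivity)]
  refine ENNReal.ofReal_le_ofReal ?_
  refine (dens_bound hp hc hc1 hx.2.1 hx.2.2 (norm_nonneg _)).trans ?_
  refine mul_le_mul_of_nonneg_left ?_ (by positivity)
  exact Finset.single_le_sum (f := fun i => u i x * (|f i x| ^ p + ‖fderiv ℝ (f i) x‖ ^ p))
    (fun i _ => mul_nonneg (hu0 x hx.1 i) (by positivity)) (Finset.mem_univ j)

/-- For a suitable level `t ∈ (c / 4, c / 2)` the region, or its complement in `Ω`, has measure at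
most a constant times `∫ dens`. On the relative boundary some `|f j| = t`, where `u j ≥ c`; hence
its Hausdorff measure is at most `Φ t`, and averaging over `t` finds a level at which `Φ t` is
controlled by `∫ dens`. The isoperimetric inequality concludes, with one power of the measure
absorbed by `|S| ≤ |S| ^ ((d - 1) / d) |Ω| ^ (1 / d)`. -/
lemma exists_region {d N : ℕ} (hd : 2 ≤ d) {p c : ℝ} (hp : 1 ≤ p) (hc : 0 < c) (hc1 : c ≤ 1)
    {Ω : Set (EuclideanSpace ℝ (Fin d))} (hΩ : IsOpen Ω) (hΩb : Bornology.IsBounded Ω)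
    (hiso : ∃ c : ℝ, 0 < c ∧ ∀ S : Set (EuclideanSpace ℝ (Fin d)), S ⊆ Ω →
      MeasurableSet S → volume S ≤ volume Ω / 2 →
      ENNReal.ofReal c * volume S ^ (((d : ℝ) - 1) / d) ≤ μH[(d : ℝ) - 1] (Ω ∩ frontier S)) :
    ∃ C : ENNReal, C ≠ ⊤ ∧ ∀ f u : Fin N → EuclideanSpace ℝ (Fin d) → ℝ,
      (∀ i, ContDiffOn ℝ 1 (f i) Ω) → (∀ i, ContinuousOn (u i) Ω) →
      (∀ x ∈ Ω, ∀ i, 0 ≤ u i x) →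
      (∀ x ∈ Ω, (∀ i, -c < f i x) → ∀ j, f j x < c → c ≤ u j x) →
      ∀ K : Finset (Fin N), ∃ t ∈ Set.Ioo (c / 4) (c / 2),
        (volume (region Ω f K t) ≤ volume Ω / 2 → volume (region Ω f K t) ≤
          C * ∫⁻ x in Ω, ENNReal.ofReal (dens p f u x)) ∧
        (volume Ω / 2 ≤ volume (region Ω f K t) → volume (Ω \ region Ω f K t) ≤
          C * ∫⁻ x in Ω, ENNReal.ofReal (dens p f u x)) := by
  obtain ⟨c0, hc0, hiso⟩ := hiso
  have hv : volume Ω ≠ ⊤ := hΩb.measure_lt_top.ne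
  have hd0 : (0 : ℝ) < d := by
    have : 0 < d := by lia
    exact_mod_cast this
  set B : ENNReal := N * (2 * (ENNReal.ofReal (2 * (d : ℝ) ^ d) *
    ENNReal.ofReal (4 / c * (8 / c) ^ p))) with hB
  have hBt : B ≠ ⊤ := by
    refine ENNReal.mul_ne_top (by simp) (ENNReal.mul_ne_top (by simp)
      (ENNReal.mul_ne_top ENNReal.ofReal_ne_top ENNReal.ofReal_ne_top))
  refine ⟨(ENNReal.ofReal c0)⁻¹ * (volume Ω ^ (1 / (d : ℝ)) * (B * (ENNReal.ofReal (c / 4))⁻¹)),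
    ?_, fun f u hf hu hu0 h1 K => ?_⟩
  · refine ENNReal.mul_ne_top (by simpa using hc0) (ENNReal.mul_ne_top
      (ENNReal.rpow_ne_top_of_nonneg (by positivity) hv) (ENNReal.mul_ne_top hBt ?_))
    simpa using hc
  set D := ∫⁻ x in Ω, ENNReal.ofReal (dens p f u x) with hD
  choose h hm hle hint using strip_bound hd hp hc hc1 hΩ hΩb hf hu hu0
  let Φ : ℝ → ENNReal := fun t => ∑ j, (h j t + h j (-t))
  have hΦm : Measurable Φ := Finset.measurable_fun_sum _ fun j _ =>
    (hm j).add ((hm j).comp measurable_neg)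
  have hΦint : ∫⁻ t, Φ t ≤ B * D := by
    have hmj : ∀ j, Measurable fun t => h j t + h j (-t) := fun j =>
      (hm j).add ((hm j).comp measurable_neg)
    change ∫⁻ t, ∑ j, (h j t + h j (-t)) ≤ _
    rw [lintegral_finsetSum _ fun j _ => hmj j]
    refine (Finset.sum_le_card_nsmul _ _ (2 * (ENNReal.ofReal (2 * (d : ℝ) ^ d) *
      (ENNReal.ofReal (4 / c * (8 / c) ^ p) * D))) fun j _ => ?_).trans_eq ?_
    · rw [lintegral_add_left (hm j), (Measure.measurePreserving_neg volume).lintegral_comp (hm j),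
        ← two_mul]
      exact mul_le_mul_right (hint j) _
    · simp only [Finset.card_univ, Fintype.card_fin, nsmul_eq_mul, hB]
      ring
  obtain ⟨t, ht, hΦt⟩ := exists_le_setLAverage (μ := volume) (s := Set.Ioo (c / 4) (c / 2))
    (by rw [Real.volume_Ioo]; simp; linarith) (by simp [Real.volume_Ioo]) hΦm.aemeasurable
  have hΦt' : Φ t ≤ B * (ENNReal.ofReal (c / 4))⁻¹ * D := by
    refine hΦt.trans ?_
    rw [setLAverage_eq, Real.volume_Ioo, show c / 2 - c / 4 = c / 4 by ring, div_eq_mul_inv]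
    calc _ ≤ (B * D) * (ENNReal.ofReal (c / 4))⁻¹ :=
          mul_le_mul_left ((setLIntegral_le_lintegral _ _).trans hΦint) _
      _ = _ := by ring
  have ht0 : 0 < t := lt_trans (by positivity) ht.1
  have hfront : μH[(d : ℝ) - 1] (Ω ∩ frontier (region Ω f K t)) ≤ Φ t := by
    have hsub : Ω ∩ frontier (region Ω f K t) ⊆ ⋃ j,
        (({x ∈ Ω | c / 2 < u j x ∧ c / 8 < |f j x|} ∩ {x | f j x = t}) ∪
          ({x ∈ Ω | c / 2 < u j x ∧ c / 8 < |f j x|} ∩ {x | f j x = -t})) := by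
      rintro x ⟨hx, hxf⟩
      obtain ⟨ha, j, hj⟩ := frontier_region hΩ (fun i => (hf i).continuousOn) K ht0 hx hxf
      have huj : c ≤ u j x := h1 x hx (fun i => by linarith [ha i, ht.2]) j (by
        rcases hj with hj | hj <;> rw [hj] <;> linarith [ht.2])
      have habs : |f j x| = t := by
        rcases hj with hj | hj <;> rw [hj] <;> simp [abs_of_pos ht0]
      have hV : x ∈ {x ∈ Ω | c / 2 < u j x ∧ c / 8 < |f j x|} :=
        ⟨hx, by linarith, by rw [habs]; linarith [ht.1]⟩
      refine Set.mem_iUnion.2 ⟨j, ?_⟩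
      rcases hj with hj | hj
      · exact Or.inl ⟨hV, hj⟩
      · exact Or.inr ⟨hV, hj⟩
    refine (measure_mono hsub).trans ((measure_iUnion_le _).trans ?_)
    rw [tsum_fintype]
    exact Finset.sum_le_sum fun j _ => (measure_union_le _ _).trans
      (add_le_add (hle j t) (hle j (-t)))
  have hSm : MeasurableSet (region Ω f K t) :=
    (isOpen_region hΩ (fun i => (hf i).continuousOn) K t).measurableSet
  have hSΩ : region Ω f K t ⊆ Ω := fun x hx => hx.1
  have key : ∀ S ⊆ Ω, MeasurableSet S → volume S ≤ volume Ω / 2 →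
      Ω ∩ frontier S = Ω ∩ frontier (region Ω f K t) →
      volume S ≤ (ENNReal.ofReal c0)⁻¹ * (volume Ω ^ (1 / (d : ℝ)) *
        (B * (ENNReal.ofReal (c / 4))⁻¹)) * D := by
    intro S hS hSm' hS2 hfr
    have h2 := hiso S hS hSm' hS2
    rw [hfr] at h2
    have h3 : volume S ^ (((d : ℝ) - 1) / d) ≤ (ENNReal.ofReal c0)⁻¹ * Φ t := by
      rw [← ENNReal.div_eq_inv_mul, ENNReal.le_div_iff_mul_le (Or.inl (by simpa using hc0))
        (Or.inl ENNReal.ofReal_ne_top), mul_comm]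
      exact h2.trans hfront
    have h4 : volume S = volume S ^ (((d : ℝ) - 1) / d) * volume S ^ (1 / (d : ℝ)) := by
      have hd2 : (2 : ℝ) ≤ d := by exact_mod_cast hd
      rw [← ENNReal.rpow_add_of_nonneg _ _ (div_nonneg (by linarith) hd0.le) (by positivity),
        ← add_div, sub_add_cancel, div_self hd0.ne', ENNReal.rpow_one]
    rw [h4]
    calc _ ≤ ((ENNReal.ofReal c0)⁻¹ * (B * (ENNReal.ofReal (c / 4))⁻¹ * D)) *
          volume Ω ^ (1 / (d : ℝ)) := by
          refine mul_le_mul' (h3.trans (mul_le_mul_right hΦt' _)) ?_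
          exact ENNReal.rpow_le_rpow (measure_mono hS) (by positivity)
      _ = _ := by ring
  refine ⟨t, ht, fun h => key _ hSΩ hSm h rfl, fun h => ?_⟩
  -- The complement of the region in `Ω` has the same relative boundary.
  refine key _ Set.sdiff_subset (hΩ.measurableSet.diff hSm) ?_ ?_
  · rw [measure_sdiff hSΩ hSm.nullMeasurableSet (measure_ne_top_of_subset hSΩ hv)]
    refine (tsub_le_tsub_left h _).trans_eq (ENNReal.sub_half hv)
  · have h2 := frontier_inter_open_inter (s := (region Ω f K t)ᶜ) hΩ
    rw [frontier_compl] at h2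
    rw [Set.sdiff_eq, Set.inter_comm Ω (region Ω f K t)ᶜ, Set.inter_comm Ω, h2, Set.inter_comm]

/-! ### Estimates in terms of the weighted density -/

lemma dens_nonneg {d N : ℕ} {p : ℝ} {f u : Fin N → EuclideanSpace ℝ (Fin d) → ℝ}
    {x : EuclideanSpace ℝ (Fin d)} (hu : ∀ i, 0 ≤ u i x) : 0 ≤ dens p f u x :=
  Finset.sum_nonneg fun i _ => mul_nonneg (hu i) (by positivity)

lemma sum_le_dens {d N : ℕ} {p : ℝ} {f u : Fin N → EuclideanSpace ℝ (Fin d) → ℝ}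
    {x : EuclideanSpace ℝ (Fin d)} (hu : ∀ i, 0 ≤ u i x) :
    ∑ i, u i x * |f i x| ^ p ≤ dens p f u x :=
  Finset.sum_le_sum fun i _ => mul_le_mul_of_nonneg_left
    (le_add_of_nonneg_right (by positivity)) (hu i)

lemma single_le_dens {d N : ℕ} {p : ℝ} {f u : Fin N → EuclideanSpace ℝ (Fin d) → ℝ}
    {x : EuclideanSpace ℝ (Fin d)} (hu : ∀ i, 0 ≤ u i x) (i : Fin N) :
    u i x * |f i x| ^ p ≤ dens p f u x :=
  (Finset.single_le_sum (f := fun i => u i x * |f i x| ^ p)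
    (fun i _ => mul_nonneg (hu i) (by positivity)) (Finset.mem_univ i)).trans (sum_le_dens hu)

lemma continuousOn_dens {d N : ℕ} {p : ℝ} (hp : 1 ≤ p) {Ω : Set (EuclideanSpace ℝ (Fin d))}
    (hΩ : IsOpen Ω) {f u : Fin N → EuclideanSpace ℝ (Fin d) → ℝ}
    (hf : ∀ i, ContDiffOn ℝ 1 (f i) Ω) (hu : ∀ i, ContinuousOn (u i) Ω) :
    ContinuousOn (dens p f u) Ω := by
  have hp0 : 0 ≤ p := by linarith
  refine continuousOn_finsetSum _ fun i _ => (hu i).mul (ContinuousOn.add ?_ ?_)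
  · exact (hf i).continuousOn.abs.rpow_const fun _ _ => Or.inr hp0
  · exact ((hf i).continuousOn_fderiv_of_isOpen hΩ le_rfl).norm.rpow_const fun _ _ => Or.inr hp0

lemma markov_dens {d N : ℕ} {p : ℝ} (hp : 1 ≤ p) {Ω : Set (EuclideanSpace ℝ (Fin d))}
    (hΩ : IsOpen Ω) {f u : Fin N → EuclideanSpace ℝ (Fin d) → ℝ}
    (hf : ∀ i, ContDiffOn ℝ 1 (f i) Ω) (hu : ∀ i, ContinuousOn (u i) Ω) {b : ℝ} (hb : 0 < b) :
    volume {x ∈ Ω | b ≤ dens p f u x} ≤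
      (ENNReal.ofReal b)⁻¹ * ∫⁻ x in Ω, ENNReal.ofReal (dens p f u x) := by
  have hm : AEMeasurable (fun x => ENNReal.ofReal (dens p f u x)) (volume.restrict Ω) :=
    ((continuousOn_dens hp hΩ hf hu).aemeasurable hΩ.measurableSet).ennreal_ofReal
  have h := meas_ge_le_lintegral_div hm (ε := ENNReal.ofReal b) (by simpa using hb)
    ENNReal.ofReal_ne_top
  rw [ENNReal.div_eq_inv_mul] at h
  refine le_trans ?_ h
  rw [Measure.restrict_apply' hΩ.measurableSet]
  refine measure_mono fun x hx => ⟨ENNReal.ofReal_le_ofReal hx.2, hx.1⟩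

/-- Integrated form of a pointwise bound by `M + M * dens`. -/
lemma lintegral_le_of_dens {d N : ℕ} {p M : ℝ} (hM : 0 ≤ M) {Ω A : Set (EuclideanSpace ℝ (Fin d))}
    (hA : MeasurableSet A) (hAΩ : A ⊆ Ω) {f u : Fin N → EuclideanSpace ℝ (Fin d) → ℝ}
    {g : EuclideanSpace ℝ (Fin d) → ℝ} (hg : ∀ x ∈ A, g x ≤ M + M * dens p f u x) :
    ∫⁻ x in A, ENNReal.ofReal (g x) ≤ ENNReal.ofReal M * volume A +
      ENNReal.ofReal M * ∫⁻ x in Ω, ENNReal.ofReal (dens p f u x) := by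
  calc ∫⁻ x in A, ENNReal.ofReal (g x)
      ≤ ∫⁻ x in A, (ENNReal.ofReal M + ENNReal.ofReal M * ENNReal.ofReal (dens p f u x)) := by
        refine setLIntegral_mono' hA fun x hx => ?_
        rw [← ENNReal.ofReal_mul hM]
        exact (ENNReal.ofReal_le_ofReal (hg x hx)).trans ENNReal.ofReal_add_le
    _ = ENNReal.ofReal M * volume A +
        ENNReal.ofReal M * ∫⁻ x in A, ENNReal.ofReal (dens p f u x) := by
        rw [lintegral_add_left measurable_const, setLIntegral_const,
          lintegral_const_mul' _ _ ENNReal.ofReal_ne_top]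
    _ ≤ _ := by gcongr

/-- A sequence of functions tends to `0` in measure on `Ω` when each set `{ε ≤ |g n|}` has measure
at most `C * D n` for a finite `C` depending on `ε` and `D n → 0`. -/
lemma tendstoInMeasure_of_le {d : ℕ} {Ω : Set (EuclideanSpace ℝ (Fin d))} (hΩ : IsOpen Ω)
    {g : ℕ → EuclideanSpace ℝ (Fin d) → ℝ} {D : ℕ → ENNReal} (hD : Tendsto D atTop (nhds 0))
    (h : ∀ ε : ℝ, 0 < ε → ∃ C : ENNReal, C ≠ ⊤ ∧ ∀ n, volume {x ∈ Ω | ε ≤ |g n x|} ≤ C * D n) :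
    TendstoInMeasure (volume.restrict Ω) g atTop fun _ => 0 := by
  rw [tendstoInMeasure_iff_norm]
  intro ε hε
  obtain ⟨C, hC, hle⟩ := h ε hε
  have h0 : Tendsto (fun n => C * D n) atTop (nhds 0) := by
    simpa using ENNReal.Tendsto.const_mul hD (Or.inr hC)
  refine tendsto_of_tendsto_of_tendsto_of_le_of_le tendsto_const_nhds h0 (fun _ => zero_le)
    fun n => ?_
  refine le_trans ?_ (hle n)
  rw [Measure.restrict_apply' hΩ.measurableSet]
  refine measure_mono fun x hx => ⟨hx.2, by simpa using hx.1⟩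

/-! ### The inequality -/

/-- The vectorial Poincaré–Beckner inequality (Theorem 1). Let `Ω ⊂ ℝ^d` be a bounded,
connected, open set admitting the relative isoperimetric inequality, let `(a, m)` be an
admissible pair of `C¹` coefficients with constant `κ`, `p ≥ 1`, and let `U` be a set of
nonnegative `C¹` functions such that no `L^p`-bounded sequence in `U` admits a nonempty
index set `I` with `u_{in} → 0` in measure for `i ∈ I` and `f_{in} → 0` in measure for
`i ∉ I`. Then there is `C > 0` with
`∫_Ω Σ_i |f_i|^p ≤ C ∫_Ω Σ_i u_i (|f_i|^p + |∇f_i|^p)` for all `u ∈ U`. -/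
theorem poincare_beckner {d N : ℕ} (hd : 0 < d) (hN : 0 < N) (p κ : ℝ)
    (hp : 1 ≤ p) (hκ : 0 < κ)
    (Ω : Set (EuclideanSpace ℝ (Fin d)))
    (hΩo : IsOpen Ω) (hΩb : Bornology.IsBounded Ω) (hΩc : IsConnected Ω)
    (hiso : ∃ c : ℝ, 0 < c ∧ ∀ S : Set (EuclideanSpace ℝ (Fin d)), S ⊆ Ω →
      MeasurableSet S → volume S ≤ volume Ω / 2 →
      ENNReal.ofReal c * volume S ^ (((d : ℝ) - 1) / d) ≤ μH[(d : ℝ) - 1] (Ω ∩ frontier S))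
    (a : Fin N → Fin N → EuclideanSpace ℝ (Fin d) → ℝ)
    (m : Fin N → EuclideanSpace ℝ (Fin d) → ℝ)
    (ha : ∀ i j, ContDiffOn ℝ 1 (a i j) (closure Ω))
    (hm : ∀ i, ContDiffOn ℝ 1 (m i) (closure Ω))
    (hadm : ∀ x ∈ closure Ω, IsAdmissible κ (Matrix.of fun i j => a i j x) fun i => m i x)
    (U : Set (EuclideanSpace ℝ (Fin d) → Fin N → ℝ))
    (hUC1 : ∀ u ∈ U, ∀ i, ContDiffOn ℝ 1 (fun x => u x i) (closure Ω))
    (hU0 : ∀ u ∈ U, ∀ x ∈ Ω, ∀ i, 0 ≤ u x i)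
    (hUsep : ¬ ∃ useq : ℕ → EuclideanSpace ℝ (Fin d) → Fin N → ℝ,
      (∀ n, useq n ∈ U) ∧
      (∃ B : ℝ, ∀ n,
        ∫⁻ x in Ω, ENNReal.ofReal (∑ i, |useq n x i| ^ p) ≤ ENNReal.ofReal B) ∧
      ∃ I : Finset (Fin N), I.Nonempty ∧
        (∀ i ∈ I, TendstoInMeasure (volume.restrict Ω)
          (fun n x => useq n x i) atTop fun _ => 0) ∧
        ∀ i ∉ I, TendstoInMeasure (volume.restrict Ω)
          (fun n x => m i x - ∑ j, a i j x * useq n x j) atTop fun _ => 0) :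
    ∃ C : ℝ, 0 < C ∧ ∀ u ∈ U,
      ∫⁻ x in Ω, ENNReal.ofReal (∑ i, |m i x - ∑ j, a i j x * u x j| ^ p) ≤
        ENNReal.ofReal C * ∫⁻ x in Ω, ENNReal.ofReal (∑ i, u x i *
          (|m i x - ∑ j, a i j x * u x j| ^ p +
            ‖gradient (fun y => m i y - ∑ j, a i j y * u y j) x‖ ^ p)) := by
  classical
  have hp0 : 0 ≤ p := by linarith
  -- In dimension one the exponent `(d - 1) / d` vanishes, and `S = ∅` contradicts the
  -- isoperimetric hypothesis because `0 ^ 0 = 1`.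
  have hd2 : 2 ≤ d := by
    by_contra hlt
    obtain rfl : d = 1 := by lia
    obtain ⟨c, hc, h⟩ := hiso
    have h1 := h ∅ (Set.empty_subset _) MeasurableSet.empty (by simp)
    simp at h1
    linarith
  have hcl : Ω ⊆ closure Ω := subset_closure
  have hv : volume Ω ≠ ⊤ := hΩb.measure_lt_top.ne
  obtain ⟨c, δ, M, hc, hc1, hδ, hM, hpw⟩ := pointwise_bounds hΩb.isCompact_closure hN hκ hp
    (fun i j => (ha i j).continuousOn) (fun i => (hm i).continuousOn) hadm
  obtain ⟨C₁, hC₁, hreg⟩ := exists_region (N := N) hd2 hp hc hc1 hΩo hΩb hiso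
  let F : (EuclideanSpace ℝ (Fin d) → Fin N → ℝ) → Fin N → EuclideanSpace ℝ (Fin d) → ℝ :=
    fun u i x => m i x - ∑ j, a i j x * u x j
  let W : (EuclideanSpace ℝ (Fin d) → Fin N → ℝ) → Fin N → EuclideanSpace ℝ (Fin d) → ℝ :=
    fun u i x => u x i
  let D : (EuclideanSpace ℝ (Fin d) → Fin N → ℝ) → ENNReal :=
    fun u => ∫⁻ x in Ω, ENNReal.ofReal (dens p (F u) (W u) x)
  have hF : ∀ u ∈ U, ∀ i, ContDiffOn ℝ 1 (F u i) Ω := fun u hu i =>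
    ((hm i).sub (ContDiffOn.sum fun j _ => (ha i j).mul (hUC1 u hu j))).mono hcl
  have hW : ∀ u ∈ U, ∀ i, ContinuousOn (W u i) Ω := fun u hu i =>
    (hUC1 u hu i).continuousOn.mono hcl
  have hpw' : ∀ u ∈ U, ∀ x ∈ Ω,
      ((∀ i, -c < F u i x) → ∀ j, F u j x < c → c ≤ W u j x) ∧
      (∑ i, W u i x * |F u i x| ^ p < δ → ∀ j, |F u j x| < c / 4 ∨ c / 2 < F u j x) ∧
      ∑ i, |F u i x| ^ p ≤ M + M * ∑ i, W u i x * |F u i x| ^ p ∧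
      ∑ i, |W u i x| ^ p ≤ M + M * ∑ i, W u i x * |F u i x| ^ p := fun u hu x hx =>
    hpw x (hcl hx) (u x) (hU0 u hu x hx) (fun i => F u i x) fun i => rfl
  have hG : ∀ u ∈ U, ∀ x ∈ Ω, ∑ i, W u i x * |F u i x| ^ p ≤ dens p (F u) (W u) x :=
    fun u hu x hx => sum_le_dens (hU0 u hu x hx)
  have hFM : ∀ u ∈ U, ∀ x ∈ Ω, ∑ i, |F u i x| ^ p ≤ M + M * dens p (F u) (W u) x :=
    fun u hu x hx => (hpw' u hu x hx).2.2.1.trans (by gcongr; exact hG u hu x hx)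
  have hWM : ∀ u ∈ U, ∀ x ∈ Ω, ∑ i, |W u i x| ^ p ≤ M + M * dens p (F u) (W u) x :=
    fun u hu x hx => (hpw' u hu x hx).2.2.2.trans (by gcongr; exact hG u hu x hx)
  have hmarkov : ∀ u ∈ U, ∀ b : ℝ, 0 < b →
      volume {x ∈ Ω | b ≤ dens p (F u) (W u) x} ≤ (ENNReal.ofReal b)⁻¹ * D u :=
    fun u hu b hb => markov_dens hp hΩo (hF u hu) (hW u hu) hb
  have hinv : ∀ b : ℝ, 0 < b → (ENNReal.ofReal b)⁻¹ ≠ ⊤ := fun b hb => by simpa using hb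
  have hregU : ∀ u ∈ U, ∀ K : Finset (Fin N), ∃ t ∈ Set.Ioo (c / 4) (c / 2),
      (volume (region Ω (F u) K t) ≤ volume Ω / 2 → volume (region Ω (F u) K t) ≤ C₁ * D u) ∧
      (volume Ω / 2 ≤ volume (region Ω (F u) K t) →
        volume (Ω \ region Ω (F u) K t) ≤ C₁ * D u) := fun u hu =>
    hreg (F u) (W u) (hF u hu) (hW u hu) (hU0 u hu) fun x hx => (hpw' u hu x hx).1
  choose! t ht hsmall hlarge using hregU
  let S : (EuclideanSpace ℝ (Fin d) → Fin N → ℝ) → Finset (Fin N) →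
    Set (EuclideanSpace ℝ (Fin d)) := fun u K => region Ω (F u) K (t u K)
  have hSo : ∀ u ∈ U, ∀ K, MeasurableSet (S u K) := fun u hu K =>
    (isOpen_region hΩo (fun i => (hF u hu i).continuousOn) K _).measurableSet
  have hSΩ : ∀ u K, S u K ⊆ Ω := fun u K x hx => hx.1
  have hSin : ∀ u ∈ U, ∀ K, ∀ x ∈ S u K, ∀ i ∈ K, |F u i x| < c / 2 := by
    intro u hu K x hx i hi
    have h1 := hx.2 i
    rw [if_pos hi] at h1
    exact (abs_lt.2 h1).trans (ht u hu K).2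
  have hSout : ∀ u ∈ U, ∀ K, ∀ x ∈ S u K, ∀ i ∉ K, c / 4 < F u i x := by
    intro u hu K x hx i hi
    have h1 := hx.2 i
    rw [if_neg hi] at h1
    exact (ht u hu K).1.trans h1
  have hSu : ∀ u ∈ U, ∀ K, ∀ x ∈ S u K, ∀ i ∈ K, c ≤ W u i x := by
    intro u hu K x hx i hi
    refine (hpw' u hu x hx.1).1 (fun j => ?_) i ?_
    · by_cases hj : j ∈ K
      · linarith [(abs_lt.1 (hSin u hu K x hx j hj)).1]
      · linarith [hSout u hu K x hx j hj]
    · linarith [(abs_lt.1 (hSin u hu K x hx i hi)).2]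
  -- If a region with `K ≠ univ` fills at least half of `Ω`, the separation hypothesis keeps the
  -- right-hand side away from zero.
  have hsep : ∀ K : Finset (Fin N), K ≠ Finset.univ → ∃ C : ENNReal, C ≠ ⊤ ∧ ∀ u ∈ U,
      volume Ω / 2 ≤ volume (S u K) → volume Ω ≤ C * D u := by
    intro K hK
    by_contra! hcon
    choose! w hwU hwS hwD using fun n : ℕ => hcon (n + 1 : ℕ) (ENNReal.natCast_ne_top _)
    have hDle : ∀ n, D (w n) ≤ volume Ω := fun n => by
      refine le_trans ?_ (hwD n).le
      refine le_mul_of_one_le_left zero_le ?_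
      exact_mod_cast Nat.le_add_left 1 n
    have hD0 : Tendsto (fun n => D (w n)) atTop (nhds 0) := by
      have h0 : Tendsto (fun n : ℕ => volume Ω * ((n + 1 : ℕ) : ENNReal)⁻¹) atTop (nhds 0) := by
        have := ENNReal.Tendsto.const_mul
          ((tendsto_add_atTop_iff_nat 1).2 ENNReal.tendsto_inv_nat_nhds_zero)
          (Or.inr hv)
        simpa using this
      refine tendsto_of_tendsto_of_tendsto_of_le_of_le tendsto_const_nhds h0 (fun _ => zero_le)
        fun n => ?_
      change D (w n) ≤ volume Ω * ((n + 1 : ℕ) : ENNReal)⁻¹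
      rw [← div_eq_mul_inv, ENNReal.le_div_iff_mul_le (Or.inl (by simp))
        (Or.inl (ENNReal.natCast_ne_top _)), mul_comm]
      exact (hwD n).le
    refine hUsep ⟨w, hwU, ⟨(ENNReal.ofReal M * volume Ω + ENNReal.ofReal M * volume Ω).toReal,
      fun n => ?_⟩, Kᶜ, ?_, fun i hi => ?_, fun i hi => ?_⟩
    · rw [ENNReal.ofReal_toReal (by finiteness)]
      refine (lintegral_le_of_dens hM.le hΩo.measurableSet subset_rfl
        (hWM (w n) (hwU n))).trans ?_
      exact add_le_add le_rfl (mul_le_mul_right (hDle n) _)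
    · rw [← Finset.compl_ne_univ_iff_nonempty, compl_compl]
      exact hK
    · rw [Finset.mem_compl] at hi
      refine tendstoInMeasure_of_le hΩo hD0 fun ε hε =>
        ⟨C₁ + (ENNReal.ofReal (ε * (c / 4) ^ p))⁻¹, ?_, fun n => ?_⟩
      · exact ENNReal.add_ne_top.2 ⟨hC₁, hinv _ (by positivity)⟩
      rw [add_mul]
      refine le_trans (measure_mono ?_) ((measure_union_le _ _).trans (add_le_add
        (hlarge (w n) (hwU n) K (hwS n)) (hmarkov (w n) (hwU n) _ (by positivity))))
      rintro x ⟨hx, hxε⟩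
      by_cases hxS : x ∈ S (w n) K
      · refine Or.inr ⟨hx, le_trans ?_ (single_le_dens (hU0 _ (hwU n) x hx) i)⟩
        have h1 := hSout _ (hwU n) K x hxS i hi
        rw [abs_of_nonneg (hU0 _ (hwU n) x hx i)] at hxε
        refine mul_le_mul hxε ?_ (by positivity) (hU0 _ (hwU n) x hx i)
        exact Real.rpow_le_rpow (by positivity) (h1.le.trans (le_abs_self _)) hp0
      · exact Or.inl ⟨hx, hxS⟩
    · rw [Finset.mem_compl, not_not] at hi
      refine tendstoInMeasure_of_le hΩo hD0 fun ε hε =>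
        ⟨C₁ + (ENNReal.ofReal (c * ε ^ p))⁻¹, ?_, fun n => ?_⟩
      · exact ENNReal.add_ne_top.2 ⟨hC₁, hinv _ (by positivity)⟩
      rw [add_mul]
      refine le_trans (measure_mono ?_) ((measure_union_le _ _).trans (add_le_add
        (hlarge (w n) (hwU n) K (hwS n)) (hmarkov (w n) (hwU n) _ (by positivity))))
      rintro x ⟨hx, hxε⟩
      by_cases hxS : x ∈ S (w n) K
      · refine Or.inr ⟨hx, le_trans ?_ (single_le_dens (hU0 _ (hwU n) x hx) i)⟩
        refine mul_le_mul (hSu _ (hwU n) K x hxS i hi) ?_ (by positivity) (hU0 _ (hwU n) x hx i)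
        exact Real.rpow_le_rpow hε.le hxε hp0
      · exact Or.inl ⟨hx, hxS⟩
  choose! C₃ hC₃ hC₃le using hsep
  -- Outside `{δ ≤ dens}` every point of `Ω` lies in one of the regions.
  have hcover : ∀ u ∈ U, volume Ω ≤
      ∑ K, volume (S u K) + (ENNReal.ofReal δ)⁻¹ * D u := by
    intro u hu
    have hsub : Ω ⊆ (⋃ K, S u K) ∪ {x ∈ Ω | δ ≤ dens p (F u) (W u) x} := by
      intro x hx
      by_cases hδx : δ ≤ dens p (F u) (W u) x
      · exact Or.inr ⟨hx, hδx⟩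
      refine Or.inl (Set.mem_iUnion.2 ⟨Finset.univ.filter fun i => |F u i x| < c / 4, hx,
        fun i => ?_⟩)
      have hlt := (hG u hu x hx).trans_lt (not_le.1 hδx)
      have hT := ht u hu (Finset.univ.filter fun i => |F u i x| < c / 4)
      split_ifs with hi
      · have h1 : |F u i x| < c / 4 := by simpa using hi
        exact abs_lt.1 (h1.trans hT.1)
      · have h1 : ¬ |F u i x| < c / 4 := by simpa using hi
        exact hT.2.trans (((hpw' u hu x hx).2.1 hlt i).resolve_left h1)
    refine (measure_mono hsub).trans ((measure_union_le _ _).trans (add_le_add ?_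
      (hmarkov u hu δ hδ)))
    exact (measure_iUnion_le _).trans_eq (tsum_fintype _)
  let C₂ : ENNReal := ∑ K ∈ Finset.univ.erase Finset.univ, C₃ K +
    (∑ _K : Finset (Fin N), C₁ + (ENNReal.ofReal δ)⁻¹)
  have hC₂ : C₂ ≠ ⊤ := by
    refine ENNReal.add_ne_top.2 ⟨ENNReal.sum_ne_top.2 fun K hK => hC₃ K (Finset.ne_of_mem_erase hK),
      ENNReal.add_ne_top.2 ⟨ENNReal.sum_ne_top.2 fun _ _ => hC₁, hinv δ hδ⟩⟩
  -- Either the set where every `f i` is small fills half of `Ω`, or the right-hand side is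
  -- bounded below.
  have hdich : ∀ u ∈ U, volume Ω / 2 ≤ volume (S u Finset.univ) ∨ volume Ω ≤ C₂ * D u := by
    intro u hu
    by_cases h1 : ∃ K, volume Ω / 2 ≤ volume (S u K)
    · obtain ⟨K, hK⟩ := h1
      by_cases hKu : K = Finset.univ
      · exact Or.inl (hKu ▸ hK)
      · refine Or.inr ((hC₃le K hKu u hu hK).trans (mul_le_mul_left ?_ _))
        refine le_trans ?_ (le_add_of_nonneg_right zero_le)
        exact Finset.single_le_sum (f := C₃) (fun _ _ => zero_le)
          (Finset.mem_erase.2 ⟨hKu, Finset.mem_univ K⟩)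
    · push Not at h1
      refine Or.inr ((hcover u hu).trans ?_)
      calc _ ≤ ∑ _K : Finset (Fin N), C₁ * D u + (ENNReal.ofReal δ)⁻¹ * D u :=
            add_le_add (Finset.sum_le_sum fun K _ => hsmall u hu K (h1 K).le) le_rfl
        _ = (∑ _K : Finset (Fin N), C₁ + (ENNReal.ofReal δ)⁻¹) * D u := by
            rw [add_mul, Finset.sum_mul]
        _ ≤ C₂ * D u := mul_le_mul_left (le_add_of_nonneg_left zero_le) _
  let C₀ : ENNReal := ENNReal.ofReal (1 / c) + (ENNReal.ofReal M * (C₁ + C₂) + ENNReal.ofReal M)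
  have hC₀ : C₀ ≠ ⊤ := by
    simp only [C₀]
    finiteness
  have hmain : ∀ u ∈ U, ∫⁻ x in Ω, ENNReal.ofReal (∑ i, |F u i x| ^ p) ≤ C₀ * D u := by
    intro u hu
    rcases hdich u hu with h1 | h1
    · have hin : ∫⁻ x in S u Finset.univ, ENNReal.ofReal (∑ i, |F u i x| ^ p) ≤
          ENNReal.ofReal (1 / c) * D u := by
        rw [← lintegral_const_mul' _ _ ENNReal.ofReal_ne_top]
        refine (setLIntegral_mono' (hSo u hu _) fun x hx => ?_).trans
          (lintegral_mono_set (hSΩ u Finset.univ))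
        rw [← ENNReal.ofReal_mul (by positivity)]
        refine ENNReal.ofReal_le_ofReal ?_
        refine le_trans ?_ (mul_le_mul_of_nonneg_left (hG u hu x hx.1) (by positivity))
        rw [Finset.mul_sum]
        refine Finset.sum_le_sum fun i _ => ?_
        rw [← mul_assoc]
        refine le_mul_of_one_le_left (by positivity) ?_
        rw [one_div_mul_eq_div, le_div_iff₀ hc, one_mul]
        exact hSu u hu _ x hx i (Finset.mem_univ i)
      have hout : ∫⁻ x in Ω \ S u Finset.univ, ENNReal.ofReal (∑ i, |F u i x| ^ p) ≤
          ENNReal.ofReal M * (C₁ * D u) + ENNReal.ofReal M * D u :=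
        (lintegral_le_of_dens hM.le (hΩo.measurableSet.diff (hSo u hu _)) Set.sdiff_subset
          fun x hx => hFM u hu x hx.1).trans
          (add_le_add (mul_le_mul_right (hlarge u hu _ h1) _) le_rfl)
      calc _ = ∫⁻ x in S u Finset.univ ∪ (Ω \ S u Finset.univ),
            ENNReal.ofReal (∑ i, |F u i x| ^ p) := by
            rw [Set.union_sdiff_cancel (hSΩ u _)]
        _ ≤ _ := lintegral_union_le _ _ _
        _ ≤ ENNReal.ofReal (1 / c) * D u +
            (ENNReal.ofReal M * (C₁ * D u) + ENNReal.ofReal M * D u) := add_le_add hin hout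
        _ = (ENNReal.ofReal (1 / c) + (ENNReal.ofReal M * C₁ + ENNReal.ofReal M)) * D u := by ring
        _ ≤ C₀ * D u := by
            simp only [C₀]
            gcongr
            exact le_self_add
    · calc _ ≤ ENNReal.ofReal M * volume Ω + ENNReal.ofReal M * D u :=
            lintegral_le_of_dens hM.le hΩo.measurableSet subset_rfl (hFM u hu)
        _ ≤ ENNReal.ofReal M * (C₂ * D u) + ENNReal.ofReal M * D u := by gcongr
        _ = (ENNReal.ofReal M * C₂ + ENNReal.ofReal M) * D u := by ring
        _ ≤ C₀ * D u := by
            refine mul_le_mul_left ?_ _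
            refine le_trans ?_ (le_add_self (a := _) (b := ENNReal.ofReal (1 / c)))
            gcongr
            exact le_add_self
  refine ⟨C₀.toReal + 1, by positivity, fun u hu => (hmain u hu).trans ?_⟩
  refine mul_le_mul' ?_ (le_of_eq ?_)
  · refine (ENNReal.ofReal_toReal hC₀).symm.le.trans (ENNReal.ofReal_le_ofReal ?_)
    linarith
  · simp only [D, dens, F, W, gradient, LinearIsometryEquiv.norm_map]
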